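/- Let U ⊂ ℝ² be a bounded open set whose boundary is a C³ curve, let Q = {x₁, …, x_k} be a finite set of points of ∂U, and let p > 2 and C₀ > 0. Let V : U → ℝ satisfy 0 ≤ V(x) ≤ Σ_{i=1}^k C₀ / |x − x_i| for all x ∈ U. Suppose u : U → ℝ belongs to L^p(U), is three times continuously differentiable on the closure of U with the points of Q removed, satisfies Δu(x) = V(x) u(x) for all x ∈ U, and u = 0 on ∂U \ Q. Then u ≡ 0 on U. -/

import Mathlib

noncomputable section

open Real MeasureTheory Set

/-- Inner radius of the `j`-th rectangle: `r_j = 2^(-j)`. -/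
def rW (j : ℕ) : ℝ := (2 : ℝ) ^ (-(j : ℝ))

/-- Height of the `j`-th rectangle: `h_j = 2^(-β (j-1))`. -/
def hH (β : ℝ) (j : ℕ) : ℝ := (2 : ℝ) ^ (-β * ((j : ℝ) - 1))

/-- The rectangle `S_j` in the `(r, x₃)` cross-section. -/
def Srect (β : ℝ) (j : ℕ) : Set (ℝ × ℝ) :=
  {p : ℝ × ℝ | rW j ≤ p.1 ∧ p.1 < rW (j - 1) ∧ 0 < p.2 ∧ p.2 < hH β j}

/-- The `(r, x₃)` cross-section of the domain `D_m`. -/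
def Ddom (β : ℝ) (m : ℕ) : Set (ℝ × ℝ) := ⋃ j ∈ Finset.Icc 1 m, Srect β j

/-- The horizontal part `∂^H D_m` of the boundary of `D_m` (where `x₃` is locally constant). -/
def bdH (β : ℝ) (m : ℕ) : Set (ℝ × ℝ) :=
  {p : ℝ × ℝ | p.2 = 0 ∧ rW m ≤ p.1 ∧ p.1 ≤ 1} ∪
    ⋃ j ∈ Finset.Icc 1 m,
      {p : ℝ × ℝ | p.2 = hH β j ∧ rW j ≤ p.1 ∧ p.1 ≤ rW (j - 1)}

/-- The vertical part `∂^V D_m` of the boundary of `D_m` (where `r` is locally constant). -/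
def bdV (β : ℝ) (m : ℕ) : Set (ℝ × ℝ) :=
  {p : ℝ × ℝ | p.1 = 1 ∧ 0 ≤ p.2 ∧ p.2 ≤ 1} ∪
    {p : ℝ × ℝ | p.1 = rW m ∧ 0 ≤ p.2 ∧ p.2 ≤ hH β m} ∪
    ⋃ j ∈ Finset.Icc 1 (m - 1),
      {p : ℝ × ℝ | p.1 = rW j ∧ hH β (j + 1) ≤ p.2 ∧ p.2 ≤ hH β j}

/-- The full boundary `∂ D_m` of `D_m`. -/
def bdD (β : ℝ) (m : ℕ) : Set (ℝ × ℝ) := bdH β m ∪ bdV β m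

/-- The corner points of the polygonal cross-section of `D_m`
(i.e. the corner circles of the 3D domain). -/
def cornerSet (β : ℝ) (m : ℕ) : Set (ℝ × ℝ) :=
  ({(rW m, 0), ((1 : ℝ), 0), ((1 : ℝ), (1 : ℝ)), (rW m, hH β m)} : Set (ℝ × ℝ)) ∪
    ⋃ j ∈ Finset.Icc 1 (m - 1),
      ({(rW j, hH β j), (rW j, hH β (j + 1))} : Set (ℝ × ℝ))

/-- Radial partial derivative `∂_r`. -/
def pdr (F : ℝ × ℝ → ℝ) (p : ℝ × ℝ) : ℝ := deriv (fun r => F (r, p.2)) p.1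

/-- Vertical partial derivative `∂_{x₃}`. -/
def pdz (F : ℝ × ℝ → ℝ) (p : ℝ × ℝ) : ℝ := deriv (fun z => F (p.1, z)) p.2

/-- The axially symmetric Laplacian `Δ = ∂_r² + (1/r) ∂_r + ∂_{x₃}²`. -/
def cylLap (F : ℝ × ℝ → ℝ) (p : ℝ × ℝ) : ℝ :=
  pdr (pdr F) p + (1 / p.1) * pdr F p + pdz (pdz F) p

/-- The integral of an axially symmetric function over the 3-dimensional domain `D_m`,
computed in the cross-section: `∫_{D_m} f dx = 2π ∬ F r dr dx₃`. -/
def cylIntegral (β : ℝ) (m : ℕ) (F : ℝ × ℝ → ℝ) : ℝ :=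
  ∫ p in Ddom β m, F p * (2 * π * p.1)

/-- The vertical cross-section segment `D_m ∩ {r = c}` of the cross-section. -/
def vertSeg (β : ℝ) (m : ℕ) (c : ℝ) : Set ℝ := {z : ℝ | (c, z) ∈ Ddom β m}
/-- Rotation of the plane by angle `θ`. -/
def rotPlane (θ : ℝ) (x : ℝ × ℝ) : ℝ × ℝ :=
  (Real.cos θ * x.1 - Real.sin θ * x.2, Real.sin θ * x.1 + Real.cos θ * x.2)

/-- Euclidean distance in the plane `ℝ × ℝ`. -/
def euclDist (x y : ℝ × ℝ) : ℝ := Real.sqrt ((x.1 - y.1) ^ 2 + (x.2 - y.2) ^ 2)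

/-!
It suffices to apply a maximum principle to `u` and to `-u`, and the only difficulty is the
behaviour at the points of `Q`, where nothing is known about `u` beyond integrability.

The boundary being `C²`, the domain satisfies an exterior ball condition at each `q ∈ Q`, on either
side of the boundary curve. Subtracting truncated Hopf functions, convex functions of
`exp (-l |x - z|²)` centred in these balls, from `1` gives a positive superharmonic barrier `Ψ` on
`U` with bounded gradient and `Ψ(x) ≤ C |x - q|`.

Suppose `u > 0` at some point. Adding a small quadratic polynomial makes `Δu > 0` on `{u > 0}` and
`u < 0` on `∂U \ Q`, so that a smooth convex truncation `W` of `u` has its support away from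
`∂U \ Q`, with `ΔW ≥ 0`, and `ΔW > 0` somewhere. Test `W` against `χ_ε Ψ`, where `χ_ε` vanishes on
the `ε`-balls around `Q`. Since `Ψ` decays linearly, the derivatives falling on `χ_ε` contribute at
most `C ε⁻¹ ∫_{B(q, 2ε)} W`, and by Cauchy–Schwarz this is `≤ C ‖W‖_{L²(B(q, 2ε))} → 0` in dimension
at least two. Hence `∫ Ψ ΔW ≤ 0`, a contradiction.
-/

open Filter Topology InnerProductSpace Laplacian Module
open scoped Gradient RealInnerProductSpace

section Calculus

variable {E : Type*} [NormedAddCommGroup E] [InnerProductSpace ℝ E] {f g : E → ℝ} {x : E}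

lemma contDiffAt_fderiv_apply {n m : WithTop ℕ∞} (hf : ContDiffAt ℝ n f x) (hmn : m + 1 ≤ n)
    (v : E) : ContDiffAt ℝ m (fun y => fderiv ℝ f y v) x :=
  (hf.fderiv_right hmn).clm_apply contDiffAt_const

lemma fderiv_fderiv_apply (hf : ContDiffAt ℝ 2 f x) (v w : E) :
    fderiv ℝ (fun y => fderiv ℝ f y v) x w = fderiv ℝ (fderiv ℝ f) x w v := by
  have hd : DifferentiableAt ℝ (fderiv ℝ f) x :=
    (hf.fderiv_right (m := 1) (by norm_num)).differentiableAt (by norm_num)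
  simp [fderiv_clm_apply hd (differentiableAt_const v)]

lemma fderiv_fderiv_mul_apply (hf : ContDiffAt ℝ 2 f x) (hg : ContDiffAt ℝ 2 g x) (v : E) :
    fderiv ℝ (fun y => fderiv ℝ (fun z => f z * g z) y v) x v =
      g x * fderiv ℝ (fun y => fderiv ℝ f y v) x v + 2 * (fderiv ℝ f x v * fderiv ℝ g x v) +
        f x * fderiv ℝ (fun y => fderiv ℝ g y v) x v := by
  have hderiv : (fun y => fderiv ℝ (fun z => f z * g z) y v) =ᶠ[𝓝 x]
      fun y => f y * fderiv ℝ g y v + g y * fderiv ℝ f y v := by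
    filter_upwards [hf.eventually (by simp), hg.eventually (by simp)] with y hfy hgy
    simp [fderiv_fun_mul (hfy.differentiableAt (by simp)) (hgy.differentiableAt (by simp))]
  have hf₀ := hf.differentiableAt (by simp)
  have hg₀ := hg.differentiableAt (by simp)
  have hf₁ := (contDiffAt_fderiv_apply hf (m := 1) (by norm_num) v).differentiableAt (by simp)
  have hg₁ := (contDiffAt_fderiv_apply hg (m := 1) (by norm_num) v).differentiableAt (by simp)
  rw [hderiv.fderiv_eq, fderiv_fun_add (hf₀.fun_mul hg₁) (hg₀.fun_mul hf₁),
    fderiv_fun_mul hf₀ hg₁, fderiv_fun_mul hg₀ hf₁]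
  simp only [add_apply, smul_apply, smul_eq_mul]
  ring

lemma fderiv_fderiv_comp_apply {T : ℝ → ℝ} (hT : ContDiffAt ℝ 2 T (f x))
    (hf : ContDiffAt ℝ 2 f x) (v : E) :
    fderiv ℝ (fun y => fderiv ℝ (fun z => T (f z)) y v) x v =
      deriv (deriv T) (f x) * (fderiv ℝ f x v * fderiv ℝ f x v) +
        deriv T (f x) * fderiv ℝ (fun y => fderiv ℝ f y v) x v := by
  have hderiv : (fun y => fderiv ℝ (fun z => T (f z)) y v) =ᶠ[𝓝 x]
      fun y => deriv T (f y) * fderiv ℝ f y v := by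
    filter_upwards [hf.eventually (by simp),
      hf.continuousAt.eventually (hT.eventually (by simp))] with y hfy hTy
    have hcomp : HasFDerivAt (fun z => T (f z)) (deriv T (f y) • fderiv ℝ f y) y :=
      (hTy.differentiableAt (by simp)).hasDerivAt.comp_hasFDerivAt y
        (hfy.differentiableAt (by simp)).hasFDerivAt
    simp [hcomp.fderiv]
  have hT₁ : DifferentiableAt ℝ (deriv T) (f x) :=
    (contDiffAt_fderiv_apply hT (m := 1) (by norm_num) 1).differentiableAt (by simp)
  have hf₀ := (hf.differentiableAt (by simp)).hasFDerivAt
  have hf₁ := (contDiffAt_fderiv_apply hf (m := 1) (by norm_num) v).differentiableAt (by simp)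
  have hT₁f : HasFDerivAt (fun y => deriv T (f y)) (deriv (deriv T) (f x) • fderiv ℝ f x) x :=
    hT₁.hasDerivAt.comp_hasFDerivAt x hf₀
  rw [hderiv.fderiv_eq, (hT₁f.fun_mul hf₁.hasFDerivAt).fderiv]
  simp only [add_apply, smul_apply, smul_eq_mul]
  ring

lemma contDiff_norm_sub_sq (z : E) : ContDiff ℝ 2 fun y : E => ‖y - z‖ ^ 2 :=
  (contDiff_id.sub contDiff_const).norm_sq ℝ

section Gradient

variable [CompleteSpace E]

lemma real_inner_gradient_left (f : E → ℝ) (x v : E) : ⟪∇ f x, v⟫ = fderiv ℝ f x v := by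
  simp [gradient]

lemma norm_gradient (f : E → ℝ) (x : E) : ‖∇ f x‖ = ‖fderiv ℝ f x‖ := by
  simp [gradient]

lemma hasGradientAt_norm_sub_sq (z x : E) :
    HasGradientAt (fun y => ‖y - z‖ ^ 2) ((2 : ℝ) • (x - z)) x := by
  rw [hasGradientAt_iff_hasFDerivAt]
  refine (((hasFDerivAt_id x).sub_const z).norm_sq).congr_fderiv ?_
  ext v
  simp

lemma norm_fderiv_comp_norm_sub_sq {T : ℝ → ℝ} (hT : ContDiff ℝ 2 T) (z x : E) :
    ‖fderiv ℝ (fun y => T (‖y - z‖ ^ 2)) x‖ = 2 * |deriv T (‖x - z‖ ^ 2)| * ‖x - z‖ := by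
  have hcomp : HasFDerivAt (fun y => T (‖y - z‖ ^ 2))
      (deriv T (‖x - z‖ ^ 2) • toDual ℝ E ((2 : ℝ) • (x - z))) x :=
    (hT.differentiable two_ne_zero _).hasDerivAt.comp_hasFDerivAt x
      (hasGradientAt_norm_sub_sq z x).hasFDerivAt
  rw [hcomp.fderiv, norm_smul, LinearIsometryEquiv.norm_map, norm_smul, Real.norm_two,
    Real.norm_eq_abs]
  ring

lemma abs_inner_gradient_le (f g : E → ℝ) (x : E) :
    |⟪∇ f x, ∇ g x⟫| ≤ ‖fderiv ℝ f x‖ * ‖fderiv ℝ g x‖ := by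
  simpa only [norm_gradient] using abs_real_inner_le_norm (∇ f x) (∇ g x)

end Gradient

variable [FiniteDimensional ℝ E]

lemma laplacian_eq_sum_fderiv (hf : ContDiffAt ℝ 2 f x) :
    Δ f x = ∑ i, fderiv ℝ (fun y => fderiv ℝ f y (stdOrthonormalBasis ℝ E i)) x
      (stdOrthonormalBasis ℝ E i) := by
  rw [laplacian_eq_iteratedFDeriv_stdOrthonormalBasis]
  exact Finset.sum_congr rfl fun i _ => by
    simp [iteratedFDeriv_two_apply, fderiv_fderiv_apply hf]

lemma sum_fderiv_mul_fderiv (f g : E → ℝ) (x : E) :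
    ∑ i, fderiv ℝ f x (stdOrthonormalBasis ℝ E i) * fderiv ℝ g x (stdOrthonormalBasis ℝ E i) =
      ⟪∇ f x, ∇ g x⟫ := by
  rw [← (stdOrthonormalBasis ℝ E).sum_inner_mul_inner]
  exact Finset.sum_congr rfl fun i _ => by
    rw [real_inner_gradient_left, real_inner_comm, real_inner_gradient_left]

lemma laplacian_mul (hf : ContDiffAt ℝ 2 f x) (hg : ContDiffAt ℝ 2 g x) :
    Δ (fun y => f y * g y) x = g x * Δ f x + 2 * ⟪∇ f x, ∇ g x⟫ + f x * Δ g x := by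
  simp only [laplacian_eq_sum_fderiv (hf.mul hg), laplacian_eq_sum_fderiv hf,
    laplacian_eq_sum_fderiv hg, ← sum_fderiv_mul_fderiv, fderiv_fderiv_mul_apply hf hg,
    Finset.sum_add_distrib, Finset.mul_sum]

lemma laplacian_comp {T : ℝ → ℝ} (hT : ContDiffAt ℝ 2 T (f x)) (hf : ContDiffAt ℝ 2 f x) :
    Δ (fun y => T (f y)) x =
      deriv (deriv T) (f x) * ‖∇ f x‖ ^ 2 + deriv T (f x) * Δ f x := by
  have hTf : ContDiffAt ℝ 2 (fun y => T (f y)) x := hT.comp x hf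
  simp only [laplacian_eq_sum_fderiv hTf, laplacian_eq_sum_fderiv hf,
    ← real_inner_self_eq_norm_sq, ← sum_fderiv_mul_fderiv, fderiv_fderiv_comp_apply hT hf,
    Finset.sum_add_distrib, Finset.mul_sum]

lemma laplacian_comp_nonneg {T : ℝ → ℝ} (hT : ContDiffAt ℝ 2 T (f x)) (hf : ContDiffAt ℝ 2 f x)
    (hT₁ : 0 ≤ deriv T (f x)) (hT₂ : 0 ≤ deriv (deriv T) (f x)) (hΔ : 0 ≤ Δ f x) :
    0 ≤ Δ (fun y => T (f y)) x := by
  rw [laplacian_comp hT hf]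
  positivity

lemma laplacian_sum {ι : Type*} {s : Finset ι} {F : ι → E → ℝ}
    (hF : ∀ i ∈ s, ContDiffAt ℝ 2 (F i) x) :
    Δ (fun y => ∑ i ∈ s, F i y) x = ∑ i ∈ s, Δ (F i) x := by
  classical
  induction s using Finset.induction_on with
  | empty => simp
  | insert i s hi ih =>
    have hs := fun j hj => hF j (Finset.mem_insert_of_mem hj)
    simp only [Finset.sum_insert hi]
    rw [← ih hs]
    exact (hF i (Finset.mem_insert_self i s)).laplacian_add (ContDiffAt.sum hs)

lemma laplacian_norm_sub_sq (z x : E) :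
    Δ (fun y : E => ‖y - z‖ ^ 2) x = 2 * (finrank ℝ E : ℝ) := by
  have hfderiv (v : E) : (fun y => fderiv ℝ (fun y : E => ‖y - z‖ ^ 2) y v) =
      fun y => (2 : ℝ) * ⟪v, y - z⟫ := by
    funext y
    rw [← real_inner_gradient_left, (hasGradientAt_norm_sub_sq z y).gradient, inner_smul_left,
      real_inner_comm]
    simp
  have hsecond (v : E) : fderiv ℝ (fun y => (2 : ℝ) * ⟪v, y - z⟫) x v = 2 * ‖v‖ ^ 2 := by
    have := (((innerSL ℝ v).hasFDerivAt (x := x - z)).comp x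
      ((hasFDerivAt_id x).sub_const z)).const_mul 2
    rw [← real_inner_self_eq_norm_sq]
    exact DFunLike.congr_fun this.fderiv v
  rw [laplacian_eq_sum_fderiv (contDiff_norm_sub_sq z).contDiffAt]
  simp [hfderiv, hsecond, mul_comm]

lemma laplacian_comp_norm_sub_sq {T : ℝ → ℝ} (hT : ContDiff ℝ 2 T) (z x : E) :
    Δ (fun y => T (‖y - z‖ ^ 2)) x =
      4 * deriv (deriv T) (‖x - z‖ ^ 2) * ‖x - z‖ ^ 2 +
        2 * finrank ℝ E * deriv T (‖x - z‖ ^ 2) := by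
  rw [laplacian_comp hT.contDiffAt (contDiff_norm_sub_sq z).contDiffAt, laplacian_norm_sub_sq,
    (hasGradientAt_norm_sub_sq z x).gradient, norm_smul, Real.norm_two]
  ring

lemma laplacian_add_mul_norm_sub_sq_sub (hf : ContDiffAt ℝ 2 f x) (z : E) (τ c : ℝ) :
    Δ (fun y => f y + τ * (‖y - z‖ ^ 2 - c)) x = Δ f x + 2 * finrank ℝ E * τ := by
  have hT₁ : deriv (fun s => τ * (s - c)) = fun _ => τ :=
    funext fun s => by simp
  have hT : ContDiff ℝ 2 fun s => τ * (s - c) := by fun_prop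
  have hquad : ContDiffAt ℝ 2 (fun y => τ * (‖y - z‖ ^ 2 - c)) x :=
    (hT.comp (contDiff_norm_sub_sq z)).contDiffAt
  refine (hf.laplacian_add hquad).trans ?_
  rw [laplacian_comp_norm_sub_sq hT, hT₁]
  simp

end Calculus

section Truncation

lemma hasDerivAt_comp_max_zero {T T₁ : ℝ → ℝ} (hT : ∀ s, 0 ≤ s → HasDerivAt T (T₁ s) s)
    (h0 : T₁ 0 = 0) (s : ℝ) : HasDerivAt (fun t => T (max t 0)) (T₁ (max s 0)) s := by
  rcases lt_trichotomy s 0 with hs | rfl | hs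
  · rw [max_eq_right hs.le, h0]
    refine (hasDerivAt_const s (T 0)).congr_of_eventuallyEq ?_
    filter_upwards [gt_mem_nhds hs] with t ht
    rw [max_eq_right ht.le]
  · rw [max_self, h0]
    have hleft : HasDerivWithinAt (fun t => T (max t 0)) 0 (Iic 0) 0 :=
      (hasDerivWithinAt_const (0 : ℝ) (Iic 0) (T 0)).congr
        (fun t ht => by rw [max_eq_right (mem_Iic.1 ht)]) (by rw [max_self])
    have hright : HasDerivWithinAt (fun t => T (max t 0)) 0 (Ici 0) 0 :=
      (h0 ▸ hT 0 le_rfl).hasDerivWithinAt.congr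
        (fun t ht => by rw [max_eq_left (mem_Ici.1 ht)]) (by rw [max_self])
    simpa only [Iic_union_Ici, hasDerivWithinAt_univ] using hleft.union hright
  · rw [max_eq_left hs.le]
    refine (hT s hs.le).congr_of_eventuallyEq ?_
    filter_upwards [lt_mem_nhds hs] with t ht
    rw [max_eq_left ht.le]

lemma contDiff_two_of_hasDerivAt {T T₁ T₂ : ℝ → ℝ} (hT : ∀ s, HasDerivAt T (T₁ s) s)
    (hT₁ : ∀ s, HasDerivAt T₁ (T₂ s) s) (hT₂ : Continuous T₂) : ContDiff ℝ 2 T := by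
  have hC1 : ContDiff ℝ 1 T₁ := by
    rw [contDiff_one_iff_deriv, funext fun s => (hT₁ s).deriv]
    exact ⟨fun s => (hT₁ s).differentiableAt, hT₂⟩
  rw [← one_add_one_eq_two, contDiff_succ_iff_deriv, funext fun s => (hT s).deriv]
  exact ⟨fun s => (hT s).differentiableAt, by simp, hC1⟩

lemma hasDerivAt_max_pow_three (s : ℝ) :
    HasDerivAt (fun t : ℝ => max t 0 ^ 3) (3 * max s 0 ^ 2) s :=
  hasDerivAt_comp_max_zero (T := fun t => t ^ 3) (T₁ := fun t => 3 * t ^ 2)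
    (fun s _ => by simpa using hasDerivAt_pow 3 s) (by norm_num) s

lemma hasDerivAt_three_mul_max_sq (s : ℝ) :
    HasDerivAt (fun t : ℝ => 3 * max t 0 ^ 2) (6 * max s 0) s :=
  hasDerivAt_comp_max_zero (T := fun t => 3 * t ^ 2) (T₁ := fun t => 6 * t)
    (fun s _ => ((hasDerivAt_pow 2 s).const_mul 3).congr_deriv (by push_cast; ring))
    (by norm_num) s

lemma contDiff_max_pow_three : ContDiff ℝ 2 fun t : ℝ => max t 0 ^ 3 :=
  contDiff_two_of_hasDerivAt hasDerivAt_max_pow_three hasDerivAt_three_mul_max_sq (by fun_prop)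

/-- A convex `C²` regularisation of the positive part. Its linear growth keeps `softPos ∘ u`
in `L²` for every `u ∈ L²`. -/
def softPos (s : ℝ) : ℝ := max s 0 - arctan (max s 0)

lemma hasDerivAt_softPos (s : ℝ) :
    HasDerivAt softPos (max s 0 ^ 2 / (1 + max s 0 ^ 2)) s :=
  hasDerivAt_comp_max_zero (T := fun t => t - arctan t) (T₁ := fun t => t ^ 2 / (1 + t ^ 2))
    (fun s _ => ((hasDerivAt_id' s).fun_sub (hasDerivAt_arctan s)).congr_deriv
      (by field_simp; ring)) (by norm_num) s

lemma hasDerivAt_deriv_softPos (s : ℝ) :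
    HasDerivAt (fun t : ℝ => max t 0 ^ 2 / (1 + max t 0 ^ 2))
      (2 * max s 0 / (1 + max s 0 ^ 2) ^ 2) s :=
  hasDerivAt_comp_max_zero (T := fun t => t ^ 2 / (1 + t ^ 2))
    (T₁ := fun t => 2 * t / (1 + t ^ 2) ^ 2)
    (fun s _ => ((hasDerivAt_pow 2 s).fun_div ((hasDerivAt_pow 2 s).const_add 1)
      (by positivity)).congr_deriv (by congr 1; push_cast; ring)) (by norm_num) s

lemma contDiff_softPos : ContDiff ℝ 2 softPos :=
  contDiff_two_of_hasDerivAt hasDerivAt_softPos hasDerivAt_deriv_softPos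
    (Continuous.div (by fun_prop) (by fun_prop) fun s => by positivity)

lemma deriv_softPos (s : ℝ) : deriv softPos s = max s 0 ^ 2 / (1 + max s 0 ^ 2) :=
  (hasDerivAt_softPos s).deriv

lemma deriv_deriv_softPos (s : ℝ) :
    deriv (deriv softPos) s = 2 * max s 0 / (1 + max s 0 ^ 2) ^ 2 := by
  rw [funext deriv_softPos]
  exact (hasDerivAt_deriv_softPos s).deriv

lemma softPos_of_nonpos {s : ℝ} (hs : s ≤ 0) : softPos s = 0 := by
  simp [softPos, max_eq_right hs]

lemma softPos_le (s : ℝ) : softPos s ≤ max s 0 :=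
  sub_le_self _ (arctan_nonneg.2 (le_max_right s 0))

lemma softPos_nonneg (s : ℝ) : 0 ≤ softPos s := by
  have hmono : Monotone softPos := monotone_of_hasDerivAt_nonneg hasDerivAt_softPos fun s => by
    positivity
  rcases le_or_gt s 0 with hs | hs
  · exact (softPos_of_nonpos hs).ge
  · exact (softPos_of_nonpos le_rfl).symm.le.trans (hmono hs.le)

end Truncation

section Green

variable {E : Type*} [NormedAddCommGroup E] [InnerProductSpace ℝ E] {U K : Set E} {W η : E → ℝ}

/-- The flux `W D_v η - η D_v W` of Green's second identity in the direction `v`, extended by zero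
outside `U`. -/
def greenFlux (U : Set E) (W η : E → ℝ) (v : E) : E → ℝ :=
  U.indicator fun x => W x * fderiv ℝ η x v - η x * fderiv ℝ W x v

lemma greenFlux_eventuallyEq (hU : IsOpen U) {x : E} (hx : x ∈ U) (v : E) :
    greenFlux U W η v =ᶠ[𝓝 x] fun y => W y * fderiv ℝ η y v - η y * fderiv ℝ W y v := by
  filter_upwards [hU.mem_nhds hx] with y hy using indicator_of_mem hy _

lemma greenFlux_eventuallyEq_zero (hK : IsClosed K)
    (h0 : ∀ x ∈ U \ K, W =ᶠ[𝓝 x] 0 ∨ η =ᶠ[𝓝 x] 0) {x : E} (hx : x ∉ K) (v : E) :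
    greenFlux U W η v =ᶠ[𝓝 x] fun _ => 0 := by
  filter_upwards [hK.isOpen_compl.mem_nhds hx] with y hy
  by_cases hyU : y ∈ U
  · rcases h0 y ⟨hyU, hy⟩ with h | h <;>
      simp [greenFlux, hyU, h.fderiv_eq, h.eq_of_nhds]
  · exact indicator_of_notMem hyU _

lemma contDiff_greenFlux (hU : IsOpen U) (hK : IsClosed K) (hKU : K ⊆ U)
    (hW : ContDiffOn ℝ 2 W U) (hη : ContDiffOn ℝ 2 η U)
    (h0 : ∀ x ∈ U \ K, W =ᶠ[𝓝 x] 0 ∨ η =ᶠ[𝓝 x] 0) (v : E) :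
    ContDiff ℝ 1 (greenFlux U W η v) := by
  refine contDiff_iff_contDiffAt.2 fun x => ?_
  by_cases hx : x ∈ U
  · have hWx := hW.contDiffAt (hU.mem_nhds hx)
    have hηx := hη.contDiffAt (hU.mem_nhds hx)
    exact ContDiffAt.congr_of_eventuallyEq
      (((hWx.of_le one_le_two).mul (contDiffAt_fderiv_apply hηx (by norm_num) v)).sub
        ((hηx.of_le one_le_two).mul (contDiffAt_fderiv_apply hWx (by norm_num) v)))
      (greenFlux_eventuallyEq hU hx v)
  · exact contDiffAt_const.congr_of_eventuallyEq
      (greenFlux_eventuallyEq_zero hK h0 (fun h => hx (hKU h)) v)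

lemma fderiv_greenFlux_apply (hU : IsOpen U) {x : E} (hx : x ∈ U)
    (hW : ContDiffOn ℝ 2 W U) (hη : ContDiffOn ℝ 2 η U) (v : E) :
    fderiv ℝ (greenFlux U W η v) x v =
      W x * fderiv ℝ (fun y => fderiv ℝ η y v) x v -
        η x * fderiv ℝ (fun y => fderiv ℝ W y v) x v := by
  have hWx := hW.contDiffAt (hU.mem_nhds hx)
  have hηx := hη.contDiffAt (hU.mem_nhds hx)
  have hW₀ := hWx.differentiableAt two_ne_zero
  have hη₀ := hηx.differentiableAt two_ne_zero
  have hW₁ := (contDiffAt_fderiv_apply hWx (m := 1) (by norm_num) v).differentiableAt one_ne_zero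
  have hη₁ := (contDiffAt_fderiv_apply hηx (m := 1) (by norm_num) v).differentiableAt one_ne_zero
  rw [(greenFlux_eventuallyEq hU hx v).fderiv_eq,
    fderiv_fun_sub (hW₀.fun_mul hη₁) (hη₀.fun_mul hW₁), fderiv_fun_mul hW₀ hη₁,
    fderiv_fun_mul hη₀ hW₁]
  simp only [sub_apply, add_apply, smul_apply, smul_eq_mul]
  ring

variable [FiniteDimensional ℝ E]

lemma mul_laplacian_sub_eq_sum_fderiv_greenFlux (hU : IsOpen U) {x : E} (hx : x ∈ U)
    (hW : ContDiffOn ℝ 2 W U) (hη : ContDiffOn ℝ 2 η U) :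
    W x * Δ η x - η x * Δ W x =
      ∑ i, fderiv ℝ (greenFlux U W η (stdOrthonormalBasis ℝ E i)) x
        (stdOrthonormalBasis ℝ E i) := by
  simp only [fderiv_greenFlux_apply hU hx hW hη, Finset.sum_sub_distrib, ← Finset.mul_sum,
    laplacian_eq_sum_fderiv (hW.contDiffAt (hU.mem_nhds hx)),
    laplacian_eq_sum_fderiv (hη.contDiffAt (hU.mem_nhds hx))]

variable [MeasurableSpace E] [BorelSpace E]

lemma integrable_fderiv_apply {X : E → ℝ} (hX : ContDiff ℝ 1 X) (hc : HasCompactSupport X)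
    (v : E) : Integrable fun x => fderiv ℝ X x v :=
  ((hX.continuous_fderiv (by norm_num)).clm_apply continuous_const).integrable_of_hasCompactSupport
    (hc.fderiv_apply (𝕜 := ℝ) v)

lemma integral_fderiv_apply_eq_zero {X : E → ℝ} (hX : ContDiff ℝ 1 X) (hc : HasCompactSupport X)
    (v : E) : ∫ x, fderiv ℝ X x v = 0 := by
  have hint := integrable_fderiv_apply hX hc v
  simpa using integral_mul_fderiv_eq_neg_fderiv_mul_of_integrable (𝕜 := ℝ) (μ := volume)
    (f := fun _ => (1 : ℝ)) (g := X) (v := v) (by simp) (by simpa using hint)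
    (by simpa using hX.continuous.integrable_of_hasCompactSupport hc)
    (fun x _ => differentiableAt_const _) (fun x _ => hX.differentiable (by norm_num) x)

lemma integrableOn_and_setIntegral_green (hU : IsOpen U) (hK : IsCompact K) (hKU : K ⊆ U)
    (hW : ContDiffOn ℝ 2 W U) (hη : ContDiffOn ℝ 2 η U)
    (h0 : ∀ x ∈ U \ K, W =ᶠ[𝓝 x] 0 ∨ η =ᶠ[𝓝 x] 0) :
    IntegrableOn (fun x => W x * Δ η x - η x * Δ W x) U ∧
      ∫ x in U, (W x * Δ η x - η x * Δ W x) = 0 := by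
  set X := fun i => greenFlux U W η (stdOrthonormalBasis ℝ E i)
  have hXd i : ContDiff ℝ 1 (X i) := contDiff_greenFlux hU hK.isClosed hKU hW hη h0 _
  have hX0 i x (hx : x ∉ K) : X i =ᶠ[𝓝 x] fun _ => 0 :=
    greenFlux_eventuallyEq_zero hK.isClosed h0 hx _
  have hXc i : HasCompactSupport (X i) := .intro hK fun x hx => (hX0 i x hx).eq_of_nhds
  have hint i := integrable_fderiv_apply (hXd i) (hXc i) (stdOrthonormalBasis ℝ E i)
  have hsum x (hx : x ∈ U) := mul_laplacian_sub_eq_sum_fderiv_greenFlux hU hx hW hη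
  refine ⟨(integrable_finsetSum _ fun i _ => hint i).integrableOn.congr_fun
    (fun x hx => (hsum x hx).symm) hU.measurableSet, ?_⟩
  rw [setIntegral_congr_fun hU.measurableSet hsum,
    setIntegral_eq_integral_of_forall_compl_eq_zero fun x hx =>
      Finset.sum_eq_zero fun i _ => by simp [(hX0 i x fun h => hx (hKU h)).fderiv_eq, X],
    integral_finsetSum _ fun i _ => hint i]
  exact Finset.sum_eq_zero fun i _ => integral_fderiv_apply_eq_zero (hXd i) (hXc i) _

end Green

section Cutoff

variable {E : Type*} [NormedAddCommGroup E] {q x : E} {ε : ℝ}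

/-- A smooth bump on the line which turns the scaled square distance to a point into a cutoff. -/
def radialProfile : ContDiffBump (0 : ℝ) := ⟨1, 4, one_pos, by norm_num⟩

/-- The cutoff around `q` at scale `ε`: it is `1` on the ball of radius `ε` and is supported in the
ball of radius `2ε`. -/
def ballCutoff (q : E) (ε : ℝ) (x : E) : ℝ := radialProfile (ε⁻¹ ^ 2 * ‖x - q‖ ^ 2)

lemma ballCutoff_nonneg : 0 ≤ ballCutoff q ε x := radialProfile.nonneg

lemma ballCutoff_le_one : ballCutoff q ε x ≤ 1 := radialProfile.le_one

lemma ballCutoff_eq_one (hε : 0 < ε) (hx : ‖x - q‖ ≤ ε) : ballCutoff q ε x = 1 := by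
  refine radialProfile.one_of_mem_closedBall ?_
  rw [mem_closedBall_zero_iff, ← mul_pow, Real.norm_of_nonneg (by positivity)]
  exact pow_le_one₀ (by positivity) (by rwa [inv_mul_le_iff₀ hε, mul_one])

lemma ballCutoff_eq_zero (hε : 0 < ε) (hx : 2 * ε ≤ ‖x - q‖) : ballCutoff q ε x = 0 := by
  refine radialProfile.zero_of_le_dist ?_
  have h2 : 2 ≤ ε⁻¹ * ‖x - q‖ := by rwa [le_inv_mul_iff₀ hε, mul_comm]
  rw [dist_zero_right, ← mul_pow, Real.norm_of_nonneg (by positivity)]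
  calc (4 : ℝ) = 2 ^ 2 := by norm_num
    _ ≤ (ε⁻¹ * ‖x - q‖) ^ 2 := by gcongr

lemma contDiff_radialProfile_const_mul (c : ℝ) : ContDiff ℝ 2 fun s => radialProfile (c * s) :=
  radialProfile.contDiff.comp (contDiff_const.mul contDiff_id)

lemma deriv_radialProfile_const_mul (c : ℝ) :
    deriv (fun s => radialProfile (c * s)) = fun s => c * deriv radialProfile (c * s) :=
  funext fun s => deriv_comp_mul_left c radialProfile s

lemma deriv_deriv_radialProfile_const_mul (c : ℝ) :
    deriv (deriv fun s => radialProfile (c * s)) =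
      fun s => c ^ 2 * deriv (deriv radialProfile) (c * s) := by
  funext s
  have := deriv_comp_mul_left c (deriv radialProfile) s
  rw [deriv_radialProfile_const_mul, deriv_const_mul_field, this, smul_eq_mul]
  ring

variable [InnerProductSpace ℝ E]

lemma contDiff_ballCutoff : ContDiff ℝ 2 (ballCutoff q ε) :=
  (contDiff_radialProfile_const_mul _).comp (contDiff_norm_sub_sq q)

lemma norm_fderiv_ballCutoff [CompleteSpace E] (hε : 0 < ε) :
    ‖fderiv ℝ (ballCutoff q ε) x‖ =
      ε⁻¹ * ‖2 * √(ε⁻¹ ^ 2 * ‖x - q‖ ^ 2) * deriv radialProfile (ε⁻¹ ^ 2 * ‖x - q‖ ^ 2)‖ := by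
  refine (norm_fderiv_comp_norm_sub_sq (contDiff_radialProfile_const_mul _) q x).trans ?_
  rw [deriv_radialProfile_const_mul, ← mul_pow ε⁻¹ ‖x - q‖ 2, Real.sqrt_sq (by positivity)]
  simp only [norm_mul, abs_mul, Real.norm_eq_abs, abs_pow, abs_inv, abs_norm, abs_two,
    abs_of_pos hε]
  ring_nf

lemma laplacian_ballCutoff [FiniteDimensional ℝ E] :
    Δ (ballCutoff q ε) x = ε⁻¹ ^ 2 *
      (4 * (ε⁻¹ ^ 2 * ‖x - q‖ ^ 2) * deriv (deriv radialProfile) (ε⁻¹ ^ 2 * ‖x - q‖ ^ 2) +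
        2 * finrank ℝ E * deriv radialProfile (ε⁻¹ ^ 2 * ‖x - q‖ ^ 2)) := by
  refine (laplacian_comp_norm_sub_sq (contDiff_radialProfile_const_mul _) q x).trans ?_
  rw [deriv_deriv_radialProfile_const_mul, deriv_radialProfile_const_mul]
  ring

lemma exists_ballCutoff_bounds (E : Type*) [NormedAddCommGroup E] [InnerProductSpace ℝ E]
    [FiniteDimensional ℝ E] :
    ∃ M : ℝ, 0 < M ∧ ∀ (q x : E) (ε : ℝ), 0 < ε →
      ‖fderiv ℝ (ballCutoff q ε) x‖ ≤ M / ε ∧ |Δ (ballCutoff q ε) x| ≤ M / ε ^ 2 := by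
  have hT : ContDiff ℝ 2 (deriv radialProfile) := by
    simpa using radialProfile.contDiff (n := 3) |>.iterate_deriv' 2 1
  have hT₀ : Continuous (deriv radialProfile) := hT.continuous
  have hT₁ : Continuous (deriv (deriv radialProfile)) := hT.continuous_deriv one_le_two
  have hc : HasCompactSupport (deriv radialProfile) := radialProfile.hasCompactSupport.deriv
  obtain ⟨A, hA⟩ := hc.mul_left (f := fun s => 2 * √s) |>.exists_bound_of_continuous (by fun_prop)
  obtain ⟨B, hB⟩ := (hc.deriv.mul_left (f := fun s => 4 * s)).add
    (hc.mul_left (f := fun _ => 2 * (finrank ℝ E : ℝ))) |>.exists_bound_of_continuous (by fun_prop)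
  refine ⟨max (max A B) 1, by positivity, fun q x ε hε => ⟨?_, ?_⟩⟩
  · rw [norm_fderiv_ballCutoff hε, div_eq_inv_mul]
    gcongr
    exact (hA _).trans ((le_max_left A B).trans (le_max_left _ 1))
  · rw [laplacian_ballCutoff, abs_mul, abs_of_nonneg (by positivity : 0 ≤ ε⁻¹ ^ 2),
      div_eq_inv_mul, inv_pow]
    gcongr
    exact (hB _).trans ((le_max_right A B).trans (le_max_left _ 1))

end Cutoff

section Peak

variable {E : Type*} [NormedAddCommGroup E] {q z x : E} {r ρ l : ℝ}

/-- A truncated Hopf barrier: the convex function `s ↦ s₊³` of an affine rescaling of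
`exp (-l ‖x - z‖²)`, normalised to be `1` on the sphere `‖x - z‖ = ρ` and to vanish where
`‖x - z‖² ≥ ρ² + r² / 2`. -/
def hopfPeak (z : E) (ρ l r : ℝ) (x : E) : ℝ :=
  max ((exp (-l * (‖x - z‖ ^ 2 - ρ ^ 2)) - exp (-l * (r ^ 2 / 2))) /
    (1 - exp (-l * (r ^ 2 / 2)))) 0 ^ 3

lemma exp_neg_mul_half_sq_lt_one (hl : 0 < l) (hr : 0 < r) : exp (-l * (r ^ 2 / 2)) < 1 := by
  rw [exp_lt_one_iff, neg_mul, neg_lt_zero]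
  positivity

lemma hopfPeak_nonneg : 0 ≤ hopfPeak z ρ l r x := by
  unfold hopfPeak
  positivity

lemma hopfPeak_eq_zero (hl : 0 < l) (hr : 0 < r) (hx : r ^ 2 / 2 ≤ ‖x - z‖ ^ 2 - ρ ^ 2) :
    hopfPeak z ρ l r x = 0 := by
  have hexp : exp (-l * (‖x - z‖ ^ 2 - ρ ^ 2)) ≤ exp (-l * (r ^ 2 / 2)) :=
    exp_le_exp.2 (mul_le_mul_of_nonpos_left hx (neg_nonpos.2 hl.le))
  rw [hopfPeak, max_eq_right, zero_pow three_ne_zero]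
  exact div_nonpos_of_nonpos_of_nonneg (sub_nonpos.2 hexp)
    (sub_nonneg.2 (exp_neg_mul_half_sq_lt_one hl hr).le)

lemma hopfPeak_eq_one (hl : 0 < l) (hr : 0 < r) (hx : ‖x - z‖ = ρ) : hopfPeak z ρ l r x = 1 := by
  have := exp_neg_mul_half_sq_lt_one hl hr
  rw [hopfPeak, hx, sub_self, mul_zero, exp_zero, div_self (by linarith), max_eq_left zero_le_one,
    one_pow]

lemma hopfPeak_lt_one (hl : 0 < l) (hr : 0 < r) (hx : ρ ^ 2 < ‖x - z‖ ^ 2) :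
    hopfPeak z ρ l r x < 1 := by
  have hκ := exp_neg_mul_half_sq_lt_one hl hr
  have hexp : exp (-l * (‖x - z‖ ^ 2 - ρ ^ 2)) < 1 := by
    rw [exp_lt_one_iff, neg_mul, neg_lt_zero]
    exact mul_pos hl (sub_pos.2 hx)
  refine pow_lt_one₀ (le_max_right _ _) (max_lt ?_ one_pos) three_ne_zero
  rw [div_lt_one (by linarith)]
  linarith

lemma hasCompactSupport_hopfPeak [ProperSpace E] (hl : 0 < l) (hr : 0 < r) (hρ : 0 < ρ) :
    HasCompactSupport (hopfPeak z ρ l r) := by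
  refine .intro (isCompact_closedBall z (ρ + r)) fun x hx => hopfPeak_eq_zero hl hr ?_
  rw [mem_closedBall_iff_norm, not_le] at hx
  nlinarith

variable [InnerProductSpace ℝ E]

lemma contDiff_exp_neg_mul_norm_sub_sq (z : E) (l c : ℝ) :
    ContDiff ℝ 2 fun y : E => exp (-l * (‖y - z‖ ^ 2 - c)) :=
  (contDiff_const.mul ((contDiff_norm_sub_sq z).sub contDiff_const)).exp

lemma contDiff_hopfPeak : ContDiff ℝ 2 (hopfPeak z ρ l r) :=
  contDiff_max_pow_three.comp
    (((contDiff_exp_neg_mul_norm_sub_sq z l _).sub contDiff_const).div_const _)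

/-- Shrinking the exterior ball to the half as large one which touches it at `q` makes the distance
to the new sphere grow quadratically away from `q`. -/
lemma half_norm_sub_sq_lt_norm_sub_midpoint_sq (hx : dist q z < dist x z) :
    ‖x - q‖ ^ 2 / 2 < ‖x - midpoint ℝ z q‖ ^ 2 - (dist q z / 2) ^ 2 := by
  have hapollonius :=
    EuclideanGeometry.dist_sq_add_dist_sq_eq_two_mul_dist_midpoint_sq_add_half_dist_sq x z q
  have hsq : dist q z ^ 2 < dist x z ^ 2 := by gcongr
  rw [dist_comm z q, dist_eq_norm x q, dist_eq_norm x (midpoint ℝ z q)] at hapollonius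
  linarith

variable [FiniteDimensional ℝ E]

lemma laplacian_exp_neg_mul_norm_sub_sq (z x : E) (l c : ℝ) :
    Δ (fun y => exp (-l * (‖y - z‖ ^ 2 - c))) x =
      2 * l * (2 * l * ‖x - z‖ ^ 2 - finrank ℝ E) * exp (-l * (‖x - z‖ ^ 2 - c)) := by
  have hT₁ : deriv (fun s => exp (-l * (s - c))) = fun s => exp (-l * (s - c)) * -l :=
    funext fun s => by simpa using (((hasDerivAt_id s).sub_const c).const_mul (-l)).exp.deriv
  have hT : ContDiff ℝ 2 fun s => exp (-l * (s - c)) := by fun_prop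
  rw [laplacian_comp_norm_sub_sq hT, hT₁, deriv_mul_const_field, hT₁]
  ring

lemma laplacian_hopfPeak_nonneg (hl : 0 < l) (hr : 0 < r) (hρl : finrank ℝ E ≤ 2 * l * ρ ^ 2)
    (hx : ρ ^ 2 ≤ ‖x - z‖ ^ 2) : 0 ≤ Δ (hopfPeak z ρ l r) x := by
  set κ := exp (-l * (r ^ 2 / 2))
  have hκ : 0 < 1 - κ := sub_pos.2 (exp_neg_mul_half_sq_lt_one hl hr)
  have hexp := (contDiff_exp_neg_mul_norm_sub_sq z l (ρ ^ 2)).contDiffAt (x := x)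
  have hΔexp : 0 ≤ Δ (fun y => exp (-l * (‖y - z‖ ^ 2 - ρ ^ 2))) x := by
    rw [laplacian_exp_neg_mul_norm_sub_sq]
    have : (finrank ℝ E : ℝ) ≤ 2 * l * ‖x - z‖ ^ 2 := hρl.trans (by gcongr)
    exact mul_nonneg (mul_nonneg (by positivity) (sub_nonneg.2 this)) (exp_pos _).le
  have haffine : deriv (fun s => (s - κ) / (1 - κ)) = fun _ => 1 / (1 - κ) :=
    funext fun s => (((hasDerivAt_id (𝕜 := ℝ) s).sub_const κ).div_const _).deriv
  have hΔaffine : 0 ≤ Δ (fun y => (exp (-l * (‖y - z‖ ^ 2 - ρ ^ 2)) - κ) / (1 - κ)) x :=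
    laplacian_comp_nonneg (T := fun s => (s - κ) / (1 - κ)) (by fun_prop) hexp
      (by rw [haffine]; positivity) (by rw [haffine, deriv_const]) hΔexp
  refine laplacian_comp_nonneg (T := fun t => max t 0 ^ 3) contDiff_max_pow_three.contDiffAt
    ((hexp.sub contDiffAt_const).div_const _) ?_ ?_ hΔaffine
  · rw [(hasDerivAt_max_pow_three _).deriv]
    positivity
  · rw [funext fun t => (hasDerivAt_max_pow_three t).deriv, (hasDerivAt_three_mul_max_sq _).deriv]
    positivity

/-- `b` is a subharmonic peak function for the boundary point `q`, as seen from `x`: it stays below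
`1` but tends to `1` linearly at `q`, and it is localised in the ball of radius `r` around `q`.
This depends only on the germ of `b` at `x`, so that local pieces can be glued. -/
structure IsSubharmonicPeakAt (q : E) (r C : ℝ) (b : E → ℝ) (x : E) : Prop where
  contDiffAt : ContDiffAt ℝ 2 b x
  nonneg : 0 ≤ b x
  lt_one : b x < 1
  eq_zero : r ≤ ‖x - q‖ → b x = 0
  one_sub_le : 1 - b x ≤ C * ‖x - q‖
  norm_fderiv_le : ‖fderiv ℝ b x‖ ≤ C
  laplacian_nonneg : 0 ≤ Δ b x

lemma IsSubharmonicPeakAt.congr {C : ℝ} {b b' : E → ℝ} (h : IsSubharmonicPeakAt q r C b x)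
    (hb : b' =ᶠ[𝓝 x] b) : IsSubharmonicPeakAt q r C b' x where
  contDiffAt := h.contDiffAt.congr_of_eventuallyEq hb
  nonneg := hb.eq_of_nhds ▸ h.nonneg
  lt_one := hb.eq_of_nhds ▸ h.lt_one
  eq_zero hx := hb.eq_of_nhds ▸ h.eq_zero hx
  one_sub_le := hb.eq_of_nhds ▸ h.one_sub_le
  norm_fderiv_le := (hb.fderiv_eq (𝕜 := ℝ)) ▸ h.norm_fderiv_le
  laplacian_nonneg := (laplacian_congr_nhds hb).eq_of_nhds ▸ h.laplacian_nonneg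

lemma IsSubharmonicPeakAt.mono {r' C C' : ℝ} {b : E → ℝ} (h : IsSubharmonicPeakAt q r C b x)
    (hr : r ≤ r') (hC : C ≤ C') : IsSubharmonicPeakAt q r' C' b x where
  contDiffAt := h.contDiffAt
  nonneg := h.nonneg
  lt_one := h.lt_one
  eq_zero hx := h.eq_zero (hr.trans hx)
  one_sub_le := h.one_sub_le.trans (by gcongr)
  norm_fderiv_le := h.norm_fderiv_le.trans hC
  laplacian_nonneg := h.laplacian_nonneg

lemma isSubharmonicPeakAt_zero {C : ℝ} (hC : 0 ≤ C) (hx : 1 ≤ C * ‖x - q‖) :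
    IsSubharmonicPeakAt q r C (fun _ => 0) x where
  contDiffAt := contDiffAt_const
  nonneg := le_rfl
  lt_one := one_pos
  eq_zero _ := rfl
  one_sub_le := by simpa using hx
  norm_fderiv_le := by simpa using hC
  laplacian_nonneg := by simp

lemma exists_isSubharmonicPeakAt_of_exterior_ball (hz : z ≠ q) (hr : 0 < r) :
    ∃ (C : ℝ) (b : E → ℝ), ∀ x, dist q z < dist x z → IsSubharmonicPeakAt q r C b x := by
  set m := midpoint ℝ z q
  set ρ := dist q z / 2
  have hρ : 0 < ρ := half_pos (dist_pos.2 hz.symm)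
  set l : ℝ := (finrank ℝ E + 1) / (2 * ρ ^ 2)
  have hl : 0 < l := by positivity
  have hlρ : finrank ℝ E ≤ 2 * l * ρ ^ 2 := by
    have : 2 * l * ρ ^ 2 = finrank ℝ E + 1 := by simp only [l]; field_simp
    linarith
  have hsmooth : ContDiff ℝ 2 (hopfPeak m ρ l r) := contDiff_hopfPeak
  have hq : hopfPeak m ρ l r q = 1 := hopfPeak_eq_one hl hr (by
    rw [← dist_eq_norm, dist_right_midpoint, dist_comm, Real.norm_two, inv_mul_eq_div])
  obtain ⟨C, hC⟩ := (hasCompactSupport_hopfPeak hl hr hρ (z := m)).fderiv (𝕜 := ℝ)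
    |>.exists_bound_of_continuous (hsmooth.continuous_fderiv two_ne_zero)
  refine ⟨C, hopfPeak m ρ l r, fun x hx => ?_⟩
  have hgrow : ‖x - q‖ ^ 2 / 2 < ‖x - m‖ ^ 2 - ρ ^ 2 :=
    half_norm_sub_sq_lt_norm_sub_midpoint_sq hx
  have houtside : ρ ^ 2 < ‖x - m‖ ^ 2 := by linarith [sq_nonneg ‖x - q‖]
  refine ⟨hsmooth.contDiffAt, hopfPeak_nonneg, hopfPeak_lt_one hl hr houtside, fun hxr => ?_, ?_,
    hC x, laplacian_hopfPeak_nonneg hl hr hlρ houtside.le⟩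
  · exact hopfPeak_eq_zero hl hr ((by gcongr : r ^ 2 / 2 ≤ ‖x - q‖ ^ 2 / 2).trans hgrow.le)
  · rw [← hq, norm_sub_rev]
    exact (le_abs_self _).trans (convex_univ.norm_image_sub_le_of_norm_fderiv_le
      (fun y _ => hsmooth.differentiable two_ne_zero y) (fun y _ => hC y) (mem_univ x) (mem_univ q))

/-- Near `q` the open set `U` splits into two disjoint open pieces, each of which satisfies an
exterior ball condition at `q`. A smooth curve through `q` cuts a disc into two such pieces, so this
covers domains lying on one side of their boundary as well as on both. -/
def IsTwoSidedExteriorBallPoint {X : Type*} [MetricSpace X] (U : Set X) (q : X) : Prop :=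
  ∃ r > 0, ∃ V W : Set X, IsOpen V ∧ IsOpen W ∧ Disjoint V W ∧ U ∩ Metric.ball q r = V ∪ W ∧
    (∃ z ≠ q, ∀ x ∈ V, dist q z < dist x z) ∧ ∃ w ≠ q, ∀ x ∈ W, dist q w < dist x w

lemma exists_isSubharmonicPeakAt {U : Set E} (hq : IsTwoSidedExteriorBallPoint U q)
    (hr : 0 < r) :
    ∃ (C : ℝ) (b : E → ℝ), ∀ x ∈ U, IsSubharmonicPeakAt q r C b x := by
  classical
  obtain ⟨R, hR, V, W, hV, hW, hVW, hUVW, ⟨z, hz, hVz⟩, w, hw, hWw⟩ := hq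
  have hs : 0 < min r (R / 2) := by positivity
  obtain ⟨A, a, ha⟩ := exists_isSubharmonicPeakAt_of_exterior_ball hz hs
  obtain ⟨B, b, hb⟩ := exists_isSubharmonicPeakAt_of_exterior_ball hw hs
  have hR₂ : min r (R / 2) ≤ R / 2 := min_le_right _ _
  have hA : A ≤ max (max A B) R⁻¹ := (le_max_left A B).trans (le_max_left _ _)
  have hB : B ≤ max (max A B) R⁻¹ := (le_max_right A B).trans (le_max_left _ _)
  refine ⟨max (max A B) R⁻¹, V.piecewise a (W.piecewise b fun _ => 0), fun x hxU => ?_⟩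
  by_cases hxV : x ∈ V
  · refine ((ha x (hVz x hxV)).mono (min_le_left _ _) hA).congr ?_
    filter_upwards [hV.mem_nhds hxV] with y hy using piecewise_eq_of_mem _ _ _ hy
  by_cases hxW : x ∈ W
  · refine ((hb x (hWw x hxW)).mono (min_le_left _ _) hB).congr ?_
    filter_upwards [hW.mem_nhds hxW] with y hy
    rw [piecewise_eq_of_notMem _ _ _ (hVW.notMem_of_mem_right hy), piecewise_eq_of_mem _ _ _ hy]
  have hxR : R ≤ ‖x - q‖ := by
    by_contra! hlt
    have : x ∈ V ∪ W := hUVW ▸ ⟨hxU, mem_ball_iff_norm.2 hlt⟩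
    exact this.elim hxV hxW
  refine (isSubharmonicPeakAt_zero (by positivity) ?_).congr ?_
  · calc 1 = R⁻¹ * R := (inv_mul_cancel₀ hR.ne').symm
      _ ≤ max (max A B) R⁻¹ * ‖x - q‖ := by gcongr; exact le_max_right _ _
  have hcont : Continuous fun y => ‖y - q‖ := by fun_prop
  filter_upwards [hcont.continuousAt.eventually_const_lt (by linarith : R / 2 < ‖x - q‖)] with y hy
  by_cases hyV : y ∈ V
  · rw [piecewise_eq_of_mem _ _ _ hyV, (ha y (hVz y hyV)).eq_zero (hR₂.trans hy.le)]
  rw [piecewise_eq_of_notMem _ _ _ hyV]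
  by_cases hyW : y ∈ W
  · rw [piecewise_eq_of_mem _ _ _ hyW, (hb y (hWw y hyW)).eq_zero (hR₂.trans hy.le)]
  · rw [piecewise_eq_of_notMem _ _ _ hyW]

end Peak

section Barrier

variable {E : Type*} [NormedAddCommGroup E] {Q : Finset E} {x : E} {r : ℝ}

lemma eventually_pairwise_two_mul_le_norm_sub (Q : Finset E) :
    ∀ᶠ r : ℝ in 𝓝[>] 0, (Q : Set E).Pairwise fun p q => 2 * r ≤ ‖p - q‖ := by
  have hpair (p q : E) : ∀ᶠ r : ℝ in 𝓝[>] 0, p ≠ q → 2 * r ≤ ‖p - q‖ := by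
    rcases eq_or_ne p q with rfl | hpq
    · exact .of_forall fun r h => absurd rfl h
    have hpos : 0 < ‖p - q‖ / 2 := half_pos (norm_pos_iff.2 (sub_ne_zero.2 hpq))
    filter_upwards [Ioo_mem_nhdsGT hpos] with r hr _
    linarith [hr.2]
  filter_upwards [Q.eventually_all.2 fun p _ => Q.eventually_all.2 fun q _ => hpair p q]
    with r hr p hp q hq using hr p hp q hq

lemma sum_eq_zero_or_eq_of_separated {F : E → ℝ}
    (hsep : (Q : Set E).Pairwise fun p q => 2 * r ≤ ‖p - q‖)
    (hF : ∀ q ∈ Q, r ≤ ‖x - q‖ → F q = 0) :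
    ∑ q ∈ Q, F q = 0 ∨ ∃ q ∈ Q, ∑ p ∈ Q, F p = F q := by
  by_cases! hfar : ∀ q ∈ Q, r ≤ ‖x - q‖
  · exact .inl (Finset.sum_eq_zero fun q hq => hF q hq (hfar q hq))
  obtain ⟨q, hq, hqr⟩ := hfar
  refine .inr ⟨q, hq, Finset.sum_eq_single_of_mem q hq fun p hp hpq => hF p hp ?_⟩
  have htriangle := norm_sub_le_norm_sub_add_norm_sub p x q
  rw [norm_sub_rev p x] at htriangle
  linarith [hsep hp hq hpq]

variable [InnerProductSpace ℝ E] [FiniteDimensional ℝ E]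

/-- `Ψ` behaves at `x` like a positive superharmonic function with bounded gradient which vanishes
at least linearly at the points of `Q`. -/
structure IsSuperharmonicBarrierAt (Q : Finset E) (C : ℝ) (Ψ : E → ℝ) (x : E) : Prop where
  contDiffAt : ContDiffAt ℝ 2 Ψ x
  pos : 0 < Ψ x
  le_mul_norm_sub : ∀ q ∈ Q, Ψ x ≤ C * ‖x - q‖
  norm_fderiv_le : ‖fderiv ℝ Ψ x‖ ≤ C
  laplacian_nonpos : Δ Ψ x ≤ 0

lemma isSuperharmonicBarrierAt_one_sub_sum {C : ℝ} {b : E → E → ℝ}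
    (hsep : (Q : Set E).Pairwise fun p q => 2 * r ≤ ‖p - q‖)
    (hb : ∀ q ∈ Q, IsSubharmonicPeakAt q r C (b q) x) :
    IsSuperharmonicBarrierAt Q ((Q.card + 1) * |C|) (fun y => 1 - ∑ q ∈ Q, b q y) x := by
  have hsmooth : ContDiffAt ℝ 2 (fun y => ∑ q ∈ Q, b q y) x :=
    .sum fun q hq => (hb q hq).contDiffAt
  refine ⟨contDiffAt_const.sub hsmooth, ?_, fun q hq => ?_, ?_, ?_⟩
  · rcases sum_eq_zero_or_eq_of_separated hsep fun q hq => (hb q hq).eq_zero with h | ⟨q, hq, h⟩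
    · rw [h]
      norm_num
    · rw [h]
      exact sub_pos.2 (hb q hq).lt_one
  · have hle : b q x ≤ ∑ p ∈ Q, b p x :=
      Finset.single_le_sum (f := fun p => b p x) (fun p hp => (hb p hp).nonneg) hq
    calc 1 - ∑ p ∈ Q, b p x ≤ C * ‖x - q‖ := by linarith [(hb q hq).one_sub_le]
      _ ≤ (Q.card + 1) * |C| * ‖x - q‖ := by
        gcongr
        nlinarith [le_abs_self C, abs_nonneg C, (Nat.cast_nonneg Q.card : (0 : ℝ) ≤ Q.card)]
  · rw [fderiv_const_sub, norm_neg,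
      fderiv_fun_sum fun q hq => (hb q hq).contDiffAt.differentiableAt two_ne_zero]
    calc ‖∑ q ∈ Q, fderiv ℝ (b q) x‖ ≤ Q.card • |C| :=
          (norm_sum_le_of_le Q fun q hq => (hb q hq).norm_fderiv_le.trans (le_abs_self C)).trans
            (Finset.sum_const _).le
      _ ≤ (Q.card + 1) * |C| := by
        rw [nsmul_eq_mul]
        gcongr
        linarith
  · have : Δ (fun y => 1 - ∑ q ∈ Q, b q y) x = -∑ q ∈ Q, Δ (b q) x := by
      rw [← laplacian_sum fun q hq => (hb q hq).contDiffAt]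
      exact (contDiffAt_const.laplacian_sub hsmooth).trans (by simp)
    rw [this, neg_nonpos]
    exact Finset.sum_nonneg fun q hq => (hb q hq).laplacian_nonneg

lemma exists_isSuperharmonicBarrierAt {U : Set E}
    (hQ : ∀ q ∈ Q, IsTwoSidedExteriorBallPoint U q) :
    ∃ (C : ℝ) (Ψ : E → ℝ), ∀ x ∈ U, IsSuperharmonicBarrierAt Q C Ψ x := by
  classical
  obtain ⟨r, hsep, hr⟩ :=
    ((eventually_pairwise_two_mul_le_norm_sub Q).and self_mem_nhdsWithin).exists
  have hpeak (q : E) : ∃ (C : ℝ) (b : E → ℝ), q ∈ Q → ∀ x ∈ U, IsSubharmonicPeakAt q r C b x := by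
    by_cases hq : q ∈ Q
    · exact (exists_isSubharmonicPeakAt (hQ q hq) hr).imp fun C => .imp fun b hb _ => hb
    · exact ⟨0, 0, fun h => absurd h hq⟩
  choose C b hb using hpeak
  refine ⟨_, _, fun x hx => isSuperharmonicBarrierAt_one_sub_sum (C := ∑ q ∈ Q, |C q|) (b := b) hsep
    fun q hq => (hb q hq x hx).mono le_rfl ?_⟩
  exact (le_abs_self _).trans
    (Finset.single_le_sum (f := fun p => |C p|) (fun p _ => abs_nonneg _) hq)

end Barrier

section MassDecay

variable {E F : Type*} [NormedAddCommGroup F]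

lemma setIntegral_norm_le_sqrt_mul_sqrt {α : Type*} [MeasurableSpace α] {ν : Measure α} {f : α → F}
    (hf : MemLp f 2 ν) {s : Set α} (hs : ν s ≠ ⊤) :
    ∫ x in s, ‖f x‖ ∂ν ≤ √(∫ x in s, ‖f x‖ ^ 2 ∂ν) * √(ν.real s) := by
  have : IsFiniteMeasure (ν.restrict s) := ⟨by simpa using hs.lt_top⟩
  have hHolder := integral_mul_norm_le_Lp_mul_Lq (f := fun x => ‖f x‖) (g := fun _ => (1 : ℝ))
    .two_two (by simpa using (hf.restrict s).norm) (memLp_const 1)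
  simpa [Real.sqrt_eq_rpow] using hHolder

variable [NormedAddCommGroup E] [NormedSpace ℝ E] [FiniteDimensional ℝ E] [MeasurableSpace E]
  [BorelSpace E] {μ ν : Measure E} [μ.IsAddHaarMeasure]

lemma measureReal_closedBall_two_mul_le (hν : ν ≤ μ) (hE : 2 ≤ finrank ℝ E) (q : E) {ε : ℝ}
    (hε : 0 ≤ ε) (hε₁ : 2 * ε ≤ 1) :
    ν.real (Metric.closedBall q (2 * ε)) ≤ ε ^ 2 * (4 * μ.real (Metric.ball 0 1)) := by
  calc ν.real (Metric.closedBall q (2 * ε)) ≤ μ.real (Metric.closedBall q (2 * ε)) :=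
        ENNReal.toReal_mono measure_closedBall_lt_top.ne (hν _)
    _ = (2 * ε) ^ finrank ℝ E * μ.real (Metric.ball 0 1) :=
        Measure.addHaar_real_closedBall μ q (by positivity)
    _ ≤ (2 * ε) ^ 2 * μ.real (Metric.ball 0 1) := by
        gcongr ?_ * _
        exact pow_le_pow_of_le_one (by positivity) hε₁ hE
    _ = ε ^ 2 * (4 * μ.real (Metric.ball 0 1)) := by ring

lemma tendsto_inv_mul_setIntegral_closedBall {f : E → F} (hν : ν ≤ μ) (hE : 2 ≤ finrank ℝ E)
    (hf : MemLp f 2 ν) (q : E) :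
    Tendsto (fun ε : ℝ => ε⁻¹ * ∫ x in Metric.closedBall q (2 * ε), ‖f x‖ ∂ν) (𝓝[>] 0) (𝓝 0) := by
  set A := 4 * μ.real (Metric.ball (0 : E) 1)
  have hball : ∀ᶠ ε : ℝ in 𝓝[>] 0,
      0 < ε ∧ ν.real (Metric.closedBall q (2 * ε)) ≤ ε ^ 2 * A := by
    filter_upwards [Ioo_mem_nhdsGT (one_half_pos (α := ℝ))] with ε ⟨hε, hε₁⟩
    exact ⟨hε, measureReal_closedBall_two_mul_le hν hE q hε.le (by linarith)⟩
  have hfinite (ε : ℝ) : ν (Metric.closedBall q ε) ≠ ⊤ :=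
    ((hν _).trans_lt measure_closedBall_lt_top).ne
  have hmeasure : Tendsto (ν ∘ fun ε => Metric.closedBall q (2 * ε)) (𝓝[>] 0) (𝓝 0) := by
    refine (ENNReal.tendsto_toReal_iff (fun ε => hfinite _) ENNReal.zero_ne_top).1 ?_
    refine squeeze_zero' (.of_forall fun ε => ENNReal.toReal_nonneg) (hball.mono fun ε h => h.2) ?_
    exact (Continuous.tendsto' (by fun_prop) _ _ (by simp)).mono_left nhdsWithin_le_nhds
  have hmass : Tendsto (fun ε => √(∫ x in Metric.closedBall q (2 * ε), ‖f x‖ ^ 2 ∂ν) * √A)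
      (𝓝[>] 0) (𝓝 0) := by
    have hint : Integrable (fun x => ‖f x‖ ^ 2) ν := hf.integrable_norm_pow two_ne_zero
    simpa using (hint.tendsto_setIntegral_nhds_zero hmeasure).sqrt.mul_const √A
  refine squeeze_zero' ?_ ?_ hmass
  · filter_upwards [self_mem_nhdsWithin] with ε hε
    exact mul_nonneg (inv_nonneg.2 (le_of_lt hε)) (integral_nonneg fun x => norm_nonneg _)
  · filter_upwards [hball] with ε ⟨hε, hεA⟩
    rw [inv_mul_le_iff₀ hε]
    calc ∫ x in Metric.closedBall q (2 * ε), ‖f x‖ ∂ν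
        ≤ √(∫ x in Metric.closedBall q (2 * ε), ‖f x‖ ^ 2 ∂ν) *
            √(ν.real (Metric.closedBall q (2 * ε))) :=
          setIntegral_norm_le_sqrt_mul_sqrt hf (hfinite _)
      _ ≤ √(∫ x in Metric.closedBall q (2 * ε), ‖f x‖ ^ 2 ∂ν) * √(ε ^ 2 * A) := by gcongr
      _ = ε * (√(∫ x in Metric.closedBall q (2 * ε), ‖f x‖ ^ 2 ∂ν) * √A) := by
        rw [Real.sqrt_mul (by positivity), Real.sqrt_sq hε.le]
        ring

end MassDecay

section PuncturedCutoff

variable {E : Type*} [NormedAddCommGroup E] {Q : Finset E} {q x : E} {ε : ℝ}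

/-- The cutoff which removes the points of `Q` at scale `ε`. -/
def puncturedCutoff (Q : Finset E) (ε : ℝ) (x : E) : ℝ := 1 - ∑ q ∈ Q, ballCutoff q ε x

lemma puncturedCutoff_eq_one (hε : 0 < ε) (hx : ∀ q ∈ Q, 2 * ε ≤ ‖x - q‖) :
    puncturedCutoff Q ε x = 1 := by
  rw [puncturedCutoff, Finset.sum_eq_zero fun q hq => ballCutoff_eq_zero hε (hx q hq), sub_zero]

lemma puncturedCutoff_nonneg (hε : 0 < ε)
    (hsep : (Q : Set E).Pairwise fun p q => 2 * (2 * ε) ≤ ‖p - q‖) :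
    0 ≤ puncturedCutoff Q ε x := by
  rcases sum_eq_zero_or_eq_of_separated hsep fun q _ => ballCutoff_eq_zero (q := q) hε with
    h | ⟨q, -, h⟩
  · rw [puncturedCutoff, h, sub_zero]
    exact zero_le_one
  · rw [puncturedCutoff, h]
    exact sub_nonneg.2 ballCutoff_le_one

lemma puncturedCutoff_eq_zero (hε : 0 < ε)
    (hsep : (Q : Set E).Pairwise fun p q => 2 * (2 * ε) ≤ ‖p - q‖) (hq : q ∈ Q)
    (hx : ‖x - q‖ ≤ ε) : puncturedCutoff Q ε x = 0 := by
  refine le_antisymm ?_ (puncturedCutoff_nonneg hε hsep)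
  rw [puncturedCutoff, sub_nonpos, ← ballCutoff_eq_one hε hx]
  exact Finset.single_le_sum (f := fun p => ballCutoff p ε x) (fun p _ => ballCutoff_nonneg) hq

variable [InnerProductSpace ℝ E]

lemma contDiff_puncturedCutoff : ContDiff ℝ 2 (puncturedCutoff Q ε) :=
  contDiff_const.sub (.sum fun _ _ => contDiff_ballCutoff)

variable [FiniteDimensional ℝ E] {C M : ℝ} {Ψ : E → ℝ}

/-- The linear decay of the barrier at `q` makes up for one of the two derivatives that may fall on
the cutoff, so that the commutator is only of order `1 / ε`. -/
lemma abs_ballCutoff_commutator_le (hε : 0 < ε)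
    (hM : ‖fderiv ℝ (ballCutoff q ε) x‖ ≤ M / ε ∧ |Δ (ballCutoff q ε) x| ≤ M / ε ^ 2)
    (hΨ : IsSuperharmonicBarrierAt Q C Ψ x) (hq : q ∈ Q) :
    |Ψ x * Δ (ballCutoff q ε) x + 2 * ⟪∇ (ballCutoff q ε) x, ∇ Ψ x⟫| ≤
      (Metric.closedBall q (2 * ε)).indicator (fun _ => 4 * M * C * ε⁻¹) x := by
  by_cases hx : x ∈ Metric.closedBall q (2 * ε)
  · rw [indicator_of_mem hx]
    rw [mem_closedBall_iff_norm] at hx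
    have hC : 0 ≤ C := (norm_nonneg _).trans hΨ.norm_fderiv_le
    have hzeroth : |Ψ x * Δ (ballCutoff q ε) x| ≤ C * (2 * ε) * (M / ε ^ 2) := by
      rw [abs_mul, abs_of_pos hΨ.pos]
      exact mul_le_mul ((hΨ.le_mul_norm_sub q hq).trans (by gcongr)) hM.2 (abs_nonneg _)
        (by positivity)
    have hfirst : |⟪∇ (ballCutoff q ε) x, ∇ Ψ x⟫| ≤ M / ε * C :=
      (abs_inner_gradient_le _ _ _).trans (mul_le_mul hM.1 hΨ.norm_fderiv_le (norm_nonneg _)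
        ((norm_nonneg _).trans hM.1))
    calc |Ψ x * Δ (ballCutoff q ε) x + 2 * ⟪∇ (ballCutoff q ε) x, ∇ Ψ x⟫|
        ≤ |Ψ x * Δ (ballCutoff q ε) x| + 2 * |⟪∇ (ballCutoff q ε) x, ∇ Ψ x⟫| := by
          refine (abs_add_le _ _).trans_eq ?_
          rw [abs_mul 2, abs_two]
      _ ≤ C * (2 * ε) * (M / ε ^ 2) + 2 * (M / ε * C) := by gcongr
      _ = 4 * M * C * ε⁻¹ := by field_simp; ring
  · rw [indicator_of_notMem hx]
    rw [mem_closedBall_iff_norm, not_le] at hx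
    have hcont : Continuous fun y => ‖y - q‖ := by fun_prop
    have hzero : ballCutoff q ε =ᶠ[𝓝 x] fun _ => 0 := by
      filter_upwards [hcont.continuousAt.eventually_const_lt hx] with y hy
      exact ballCutoff_eq_zero hε hy.le
    rw [hzero.gradient_eq, (laplacian_congr_nhds hzero).eq_of_nhds]
    simp

lemma laplacian_puncturedCutoff_mul_le (hε : 0 < ε)
    (hM : ∀ q, ‖fderiv ℝ (ballCutoff q ε) x‖ ≤ M / ε ∧ |Δ (ballCutoff q ε) x| ≤ M / ε ^ 2)
    (hsep : (Q : Set E).Pairwise fun p q => 2 * (2 * ε) ≤ ‖p - q‖)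
    (hΨ : IsSuperharmonicBarrierAt Q C Ψ x) :
    Δ (fun y => puncturedCutoff Q ε y * Ψ y) x ≤
      ∑ q ∈ Q, (Metric.closedBall q (2 * ε)).indicator (fun _ => 4 * M * C * ε⁻¹) x := by
  have hprod (q : E) : ContDiffAt ℝ 2 (fun y => ballCutoff q ε y * Ψ y) x :=
    contDiff_ballCutoff.contDiffAt.mul hΨ.contDiffAt
  have hexpand : (fun y => puncturedCutoff Q ε y * Ψ y) =
      Ψ - fun y => ∑ q ∈ Q, ballCutoff q ε y * Ψ y := by
    funext y
    rw [Pi.sub_apply, puncturedCutoff, sub_mul, one_mul, Finset.sum_mul]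
  calc Δ (fun y => puncturedCutoff Q ε y * Ψ y) x
      = Δ Ψ x - ∑ q ∈ Q, Δ (fun y => ballCutoff q ε y * Ψ y) x := by
        rw [hexpand, hΨ.contDiffAt.laplacian_sub (.sum fun q _ => hprod q),
          laplacian_sum fun q _ => hprod q]
    _ = puncturedCutoff Q ε x * Δ Ψ x + ∑ q ∈ Q,
          -(Ψ x * Δ (ballCutoff q ε) x + 2 * ⟪∇ (ballCutoff q ε) x, ∇ Ψ x⟫) := by
        simp only [laplacian_mul contDiff_ballCutoff.contDiffAt hΨ.contDiffAt,
          Finset.sum_add_distrib, Finset.sum_neg_distrib, ← Finset.sum_mul, puncturedCutoff]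
        ring
    _ ≤ 0 + ∑ q ∈ Q, (Metric.closedBall q (2 * ε)).indicator (fun _ => 4 * M * C * ε⁻¹) x := by
        gcongr with q hq
        · exact mul_nonpos_of_nonneg_of_nonpos (puncturedCutoff_nonneg hε hsep) hΨ.laplacian_nonpos
        · exact (neg_le_abs _).trans (abs_ballCutoff_commutator_le hε (hM q) hΨ hq)
    _ = _ := zero_add _

end PuncturedCutoff

section MaximumPrinciple

variable {E : Type*} [NormedAddCommGroup E] {U : Set E} {Q : Finset E} {f u W : E → ℝ}

lemma tendsto_two_mul_nhdsGT_zero : Tendsto (fun ε : ℝ => 2 * ε) (𝓝[>] 0) (𝓝[>] 0) := by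
  refine tendsto_nhdsWithin_iff.2 ⟨?_, ?_⟩
  · exact (Continuous.tendsto' (by fun_prop) _ _ (mul_zero 2)).mono_left nhdsWithin_le_nhds
  · filter_upwards [self_mem_nhdsWithin] with ε hε using mul_pos two_pos (mem_Ioi.1 hε)

/-- The support of `W` meets `∂U` only in `Q`, expressed through compact subsets of `U`. -/
def VanishesNearFrontierOff (U : Set E) (Q : Finset E) (W : E → ℝ) : Prop :=
  ∀ ε > 0, ∃ K, IsCompact K ∧ K ⊆ U ∧ ∀ x ∈ U \ K, W =ᶠ[𝓝 x] 0 ∨ ∃ q ∈ Q, ‖x - q‖ < ε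

lemma vanishesNearFrontierOff_softPos_comp [ProperSpace E] (hU : IsOpen U)
    (hUb : Bornology.IsBounded U) (hf : ContinuousOn f (closure U \ Q))
    (hf₀ : ∀ x ∈ frontier U \ Q, f x < 0) :
    VanishesNearFrontierOff U Q fun x => softPos (f x) := by
  intro ε hε
  set A := closure U ∩ {x | ∀ q ∈ Q, ε ≤ ‖x - q‖}
  have hA_closed : IsClosed A := isClosed_closure.inter <| by
    simp only [ofPred_forall]
    exact isClosed_biInter fun q _ => isClosed_le continuous_const (by fun_prop)
  have hA : A ⊆ closure U \ Q := fun x hx =>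
    ⟨hx.1, fun hxQ => (hx.2 x hxQ).not_gt (by simpa using hε)⟩
  refine ⟨A ∩ f ⁻¹' Ici 0, ?_, fun x hx => ?_, fun x hx => ?_⟩
  · exact hUb.isCompact_closure.of_isClosed_subset
      ((hf.mono hA).preimage_isClosed_of_isClosed hA_closed isClosed_Ici) fun x hx => hx.1.1
  · by_contra hxU
    exact (hf₀ x ⟨⟨hx.1.1, hU.interior_eq.symm ▸ hxU⟩, (hA hx.1).2⟩).not_ge hx.2
  · by_cases! hxQ : ∃ q ∈ Q, ‖x - q‖ < ε
    · exact .inr hxQ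
    have hxA : x ∈ A := ⟨subset_closure hx.1, hxQ⟩
    have hfx : f x < 0 := not_le.1 fun h => hx.2 ⟨hxA, h⟩
    have hnhds : closure U \ (Q : Set E) ∈ 𝓝 x :=
      inter_mem (mem_of_superset (hU.mem_nhds hx.1) subset_closure)
        (Q.finite_toSet.isClosed.isOpen_compl.mem_nhds (hA hxA).2)
    refine .inl ?_
    filter_upwards [(hf.continuousAt hnhds).eventually_lt_const hfx] with y hy
      using softPos_of_nonpos hy.le

variable [InnerProductSpace ℝ E] [FiniteDimensional ℝ E]

lemma continuousAt_laplacian {f : E → ℝ} {x : E} (hf : ContDiffAt ℝ 2 f x) :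
    ContinuousAt (Δ f) x := by
  have := hf.continuousAt_iteratedFDeriv (k := 2) le_rfl
  rw [laplacian_eq_iteratedFDeriv_stdOrthonormalBasis]
  exact tendsto_finsetSum _ fun i _ => this.eval_const _

variable {C M ε : ℝ} {Ψ : E → ℝ}

lemma IsSuperharmonicBarrierAt.norm_sub_pos {x q : E} (hΨ : IsSuperharmonicBarrierAt Q C Ψ x)
    (hq : q ∈ Q) : 0 < ‖x - q‖ :=
  pos_of_mul_pos_right (hΨ.pos.trans_le (hΨ.le_mul_norm_sub q hq))
    ((norm_nonneg _).trans hΨ.norm_fderiv_le)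

lemma mul_laplacian_puncturedCutoff_mul_sub_le {N : Set E} {c : ℝ} {x : E} (hε : 0 < ε)
    (hM : ∀ q, ‖fderiv ℝ (ballCutoff q ε) x‖ ≤ M / ε ∧ |Δ (ballCutoff q ε) x| ≤ M / ε ^ 2)
    (hsep : (Q : Set E).Pairwise fun p q => 2 * (2 * ε) ≤ ‖p - q‖)
    (hΨ : IsSuperharmonicBarrierAt Q C Ψ x) (hW : 0 ≤ W x) (hΔW : 0 ≤ Δ W x)
    (hNc : x ∈ N → c ≤ Ψ x * Δ W x) (hNQ : x ∈ N → ∀ q ∈ Q, 2 * ε ≤ ‖x - q‖) :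
    W x * Δ (fun y => puncturedCutoff Q ε y * Ψ y) x - puncturedCutoff Q ε x * Ψ x * Δ W x ≤
      ∑ q ∈ Q, (Metric.closedBall q (2 * ε)).indicator (fun y => 4 * M * C * ε⁻¹ * ‖W y‖) x -
        N.indicator (fun _ => c) x := by
  refine sub_le_sub ?_ ?_
  · refine (mul_le_mul_of_nonneg_left
      (laplacian_puncturedCutoff_mul_le hε hM hsep hΨ) hW).trans_eq ?_
    rw [mul_comm, Finset.sum_mul]
    simp only [indicator, ite_mul, zero_mul, Real.norm_of_nonneg hW]
  · by_cases hxN : x ∈ N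
    · rw [indicator_of_mem hxN, puncturedCutoff_eq_one hε (hNQ hxN), one_mul]
      exact hNc hxN
    · rw [indicator_of_notMem hxN]
      exact mul_nonneg (mul_nonneg (puncturedCutoff_nonneg hε hsep) hΨ.pos.le) hΔW

lemma laplacian_softPos_comp_nonneg {x : E} (hf : ContDiffAt ℝ 2 f x)
    (hΔf : 0 < f x → 0 ≤ Δ f x) : 0 ≤ Δ (fun y => softPos (f y)) x := by
  rw [laplacian_comp contDiff_softPos.contDiffAt hf, deriv_softPos, deriv_deriv_softPos]
  rcases le_or_gt (f x) 0 with hfx | hfx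
  · simp [max_eq_right hfx]
  · have := hΔf hfx
    positivity

lemma laplacian_softPos_comp_pos {x : E} (hf : ContDiffAt ℝ 2 f x) (hfx : 0 < f x)
    (hΔf : 0 < Δ f x) : 0 < Δ (fun y => softPos (f y)) x := by
  rw [laplacian_comp contDiff_softPos.contDiffAt hf, deriv_softPos, deriv_deriv_softPos,
    max_eq_left hfx.le]
  positivity

variable [MeasurableSpace E] [BorelSpace E]

lemma setIntegral_puncturedCutoff_green (hU : IsOpen U) (hε : 0 < ε)
    (hsep : (Q : Set E).Pairwise fun p q => 2 * (2 * ε) ≤ ‖p - q‖)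
    (hΨ : ContDiffOn ℝ 2 Ψ U) (hW : ContDiffOn ℝ 2 W U) (hW₀ : VanishesNearFrontierOff U Q W) :
    let η := fun y => puncturedCutoff Q ε y * Ψ y
    IntegrableOn (fun x => W x * Δ η x - η x * Δ W x) U ∧
      ∫ x in U, (W x * Δ η x - η x * Δ W x) = 0 := by
  obtain ⟨K, hK, hKU, hWK⟩ := hW₀ ε hε
  refine integrableOn_and_setIntegral_green hU hK hKU hW
    (contDiff_puncturedCutoff.contDiffOn.mul hΨ) fun x hx => (hWK x hx).imp_right ?_
  rintro ⟨q, hq, hxq⟩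
  have hcont : Continuous fun y => ‖y - q‖ := by fun_prop
  filter_upwards [hcont.continuousAt.eventually_lt_const hxq] with y hy
  rw [puncturedCutoff_eq_zero hε hsep hq hy.le, zero_mul, Pi.zero_apply]

lemma mul_measureReal_le_sum_inv_mul_setIntegral {N : Set E} {c : ℝ} (hU : IsOpen U)
    (hε : 0 < ε)
    (hM : ∀ q x : E,
      ‖fderiv ℝ (ballCutoff q ε) x‖ ≤ M / ε ∧ |Δ (ballCutoff q ε) x| ≤ M / ε ^ 2)
    (hsep : (Q : Set E).Pairwise fun p q => 2 * (2 * ε) ≤ ‖p - q‖)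
    (hΨ : ∀ x ∈ U, IsSuperharmonicBarrierAt Q C Ψ x)
    (hW : ContDiffOn ℝ 2 W U) (hW₀ : VanishesNearFrontierOff U Q W)
    (hW_int : IntegrableOn W U) (hW_nonneg : ∀ x ∈ U, 0 ≤ W x) (hΔW : ∀ x ∈ U, 0 ≤ Δ W x)
    (hN : MeasurableSet N) (hNU : N ⊆ U) (hN_fin : volume N ≠ ⊤)
    (hNc : ∀ x ∈ N, c ≤ Ψ x * Δ W x) (hNQ : ∀ x ∈ N, ∀ q ∈ Q, 2 * ε ≤ ‖x - q‖) :
    c * volume.real N ≤ ∑ q ∈ Q, 4 * M * C *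
      (ε⁻¹ * ∫ x in Metric.closedBall q (2 * ε), ‖W x‖ ∂volume.restrict U) := by
  set B := fun q : E => (Metric.closedBall q (2 * ε)).indicator fun x => 4 * M * C * ε⁻¹ * ‖W x‖
  obtain ⟨hgreen_int, hgreen⟩ := setIntegral_puncturedCutoff_green hU hε hsep
    (fun x hx => (hΨ x hx).contDiffAt.contDiffWithinAt) hW hW₀
  have hB_int (q : E) : Integrable (B q) (volume.restrict U) :=
    (hW_int.norm.const_mul _).indicator Metric.isClosed_closedBall.measurableSet
  have hsum_int : Integrable (fun x => ∑ q ∈ Q, B q x) (volume.restrict U) :=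
    integrable_finsetSum Q fun q _ => hB_int q
  have hN_int : IntegrableOn (N.indicator fun _ => c) U :=
    ((integrableOn_const hN_fin).integrable_indicator hN).integrableOn
  have hN_eq : ∫ x in U, N.indicator (fun _ => c) x = c * volume.real N := by
    rw [setIntegral_indicator hN, inter_eq_right.2 hNU, setIntegral_const, smul_eq_mul, mul_comm]
  have hB_eq (q : E) : ∫ x in U, B q x = 4 * M * C *
      (ε⁻¹ * ∫ x in Metric.closedBall q (2 * ε), ‖W x‖ ∂volume.restrict U) := by
    rw [integral_indicator Metric.isClosed_closedBall.measurableSet, integral_const_mul, mul_assoc]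
  have hmono := setIntegral_mono_on hgreen_int (hsum_int.sub hN_int) hU.measurableSet fun x hx =>
    mul_laplacian_puncturedCutoff_mul_sub_le hε (fun q => hM q x) hsep (hΨ x hx) (hW_nonneg x hx)
      (hΔW x hx) (hNc x) (hNQ x)
  rw [hgreen, integral_sub' hsum_int hN_int, hN_eq, integral_finsetSum Q fun q _ => hB_int q,
    sub_nonneg] at hmono
  simpa only [hB_eq] using hmono

lemma laplacian_nonpos_of_vanishesNearFrontierOff (hE : 2 ≤ finrank ℝ E) (hU : IsOpen U)
    (hU_fin : volume U ≠ ⊤) (hΨ : ∀ x ∈ U, IsSuperharmonicBarrierAt Q C Ψ x)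
    (hW : ContDiffOn ℝ 2 W U) (hW₀ : VanishesNearFrontierOff U Q W)
    (hW_mem : MemLp W 2 (volume.restrict U)) (hW_nonneg : ∀ x ∈ U, 0 ≤ W x)
    (hΔW : ∀ x ∈ U, 0 ≤ Δ W x) : ∀ x ∈ U, Δ W x ≤ 0 := by
  by_contra! ⟨x₀, hx₀, hpos⟩
  have : IsFiniteMeasure (volume.restrict U) := ⟨by simpa using hU_fin.lt_top⟩
  have hW_int : IntegrableOn W U := hW_mem.integrable one_le_two
  obtain ⟨M, -, hM⟩ := exists_ballCutoff_bounds E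
  obtain ⟨c, hc, hcx₀⟩ := exists_between (mul_pos (hΨ x₀ hx₀).pos hpos)
  have hcont : ContinuousAt (fun x => Ψ x * Δ W x) x₀ :=
    (hΨ x₀ hx₀).contDiffAt.continuousAt.mul
      (continuousAt_laplacian (hW.contDiffAt (hU.mem_nhds hx₀)))
  have hnear : ∀ᶠ x in 𝓝 x₀, x ∈ U ∧ c ≤ Ψ x * Δ W x ∧ ∀ q ∈ Q, ‖x₀ - q‖ / 2 ≤ ‖x - q‖ := by
    refine (hU.eventually_mem hx₀).and ((hcont.eventually_const_le hcx₀).and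
      (Q.eventually_all.2 fun q hq => ?_))
    have hnorm : Continuous fun y => ‖y - q‖ := by fun_prop
    exact hnorm.continuousAt.eventually_const_le (half_lt_self ((hΨ x₀ hx₀).norm_sub_pos hq))
  obtain ⟨s, hs, hN⟩ := Metric.eventually_nhds_iff_ball.1 hnear
  have hsmall : ∀ᶠ ε : ℝ in 𝓝[>] 0, ∀ q ∈ Q, 2 * ε ≤ ‖x₀ - q‖ / 2 :=
    Q.eventually_all.2 fun q hq => (tendsto_two_mul_nhdsGT_zero.mono_right nhdsWithin_le_nhds)
      |>.eventually_le_const (half_pos ((hΨ x₀ hx₀).norm_sub_pos hq))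
  have hbound : ∀ᶠ ε : ℝ in 𝓝[>] 0, c * volume.real (Metric.ball x₀ s) ≤ ∑ q ∈ Q, 4 * M * C *
      (ε⁻¹ * ∫ x in Metric.closedBall q (2 * ε), ‖W x‖ ∂volume.restrict U) := by
    filter_upwards [self_mem_nhdsWithin, hsmall,
      tendsto_two_mul_nhdsGT_zero.eventually (eventually_pairwise_two_mul_le_norm_sub Q)]
      with ε hε hεQ hsep
    exact mul_measureReal_le_sum_inv_mul_setIntegral hU hε (fun q x => hM q x ε hε) hsep hΨ hW hW₀
      hW_int hW_nonneg hΔW Metric.isOpen_ball.measurableSet (fun x hx => (hN x hx).1)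
      measure_ball_lt_top.ne (fun x hx => (hN x hx).2.1)
      fun x hx q hq => (hεQ q hq).trans ((hN x hx).2.2 q hq)
  have hlim := tendsto_finsetSum Q fun q _ => (tendsto_inv_mul_setIntegral_closedBall
    (Measure.restrict_le_self (s := U)) hE hW_mem q).const_mul (4 * M * C)
  simp only [mul_zero, Finset.sum_const_zero] at hlim
  have hball : 0 < volume.real (Metric.ball x₀ s) :=
    ENNReal.toReal_pos (Metric.measure_ball_pos _ _ hs).ne' measure_ball_lt_top.ne
  exact (ge_of_tendsto hlim hbound).not_gt (mul_pos hc hball)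

lemma nonpos_of_laplacian_pos (hE : 2 ≤ finrank ℝ E) (hU : IsOpen U)
    (hUb : Bornology.IsBounded U) (hQ : ∀ q ∈ Q, IsTwoSidedExteriorBallPoint U q)
    (hf : ContDiffOn ℝ 2 f U) (hf_cont : ContinuousOn f (closure U \ Q))
    (hf_mem : MemLp (fun x => max (f x) 0) 2 (volume.restrict U))
    (hf₀ : ∀ x ∈ frontier U \ Q, f x < 0) (hΔf : ∀ x ∈ U, 0 < f x → 0 < Δ f x) :
    ∀ x ∈ U, f x ≤ 0 := by
  by_contra! ⟨x₀, hx₀, hfx₀⟩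
  obtain ⟨C, Ψ, hΨ⟩ := exists_isSuperharmonicBarrierAt hQ
  have hfAt {x : E} (hx : x ∈ U) : ContDiffAt ℝ 2 f x := hf.contDiffAt (hU.mem_nhds hx)
  have hW : ContDiffOn ℝ 2 (fun x => softPos (f x)) U := contDiff_softPos.comp_contDiffOn hf
  have hW_mem : MemLp (fun x => softPos (f x)) 2 (volume.restrict U) :=
    hf_mem.mono (hW.continuousOn.aestronglyMeasurable hU.measurableSet) <| ae_of_all _ fun x => by
      rw [norm_of_nonneg (softPos_nonneg _), norm_of_nonneg (le_max_right _ _)]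
      exact softPos_le _
  refine (laplacian_softPos_comp_pos (hfAt hx₀) hfx₀ (hΔf x₀ hx₀ hfx₀)).not_ge ?_
  exact laplacian_nonpos_of_vanishesNearFrontierOff hE hU hUb.measure_lt_top.ne hΨ hW
    (vanishesNearFrontierOff_softPos_comp hU hUb hf_cont hf₀) hW_mem
    (fun x _ => softPos_nonneg _)
    (fun x hx => laplacian_softPos_comp_nonneg (hfAt hx) fun h => (hΔf x hx h).le) x₀ hx₀

theorem nonpos_of_laplacian_nonneg (hE : 2 ≤ finrank ℝ E) (hU : IsOpen U)
    (hUb : Bornology.IsBounded U) (hQ : ∀ q ∈ Q, IsTwoSidedExteriorBallPoint U q)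
    (hu : ContDiffOn ℝ 2 u U) (hu_cont : ContinuousOn u (closure U \ Q))
    (hu_mem : MemLp u 2 (volume.restrict U)) (hu₀ : ∀ x ∈ frontier U \ Q, u x ≤ 0)
    (hΔu : ∀ x ∈ U, 0 < u x → 0 ≤ Δ u x) : ∀ x ∈ U, u x ≤ 0 := by
  by_contra! ⟨x₀, hx₀, hux₀⟩
  obtain ⟨R, hR, hUR⟩ := hUb.closure.subset_closedBall_lt 0 x₀
  obtain ⟨τ, hτ, hτR⟩ : ∃ τ > 0, τ * (R ^ 2 + 1) < u x₀ :=
    ⟨u x₀ / (2 * (R ^ 2 + 1)), by positivity, by field_simp; linarith⟩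
  set f := fun x => u x + τ * (‖x - x₀‖ ^ 2 - (R ^ 2 + 1))
  have hquad : ContDiff ℝ 2 fun x => τ * (‖x - x₀‖ ^ 2 - (R ^ 2 + 1)) :=
    contDiff_const.mul ((contDiff_norm_sub_sq x₀).sub contDiff_const)
  have hf : ContDiffOn ℝ 2 f U := hu.add hquad.contDiffOn
  have hfu {x : E} (hx : x ∈ closure U) : f x < u x := by
    have : ‖x - x₀‖ ^ 2 ≤ R ^ 2 := by
      gcongr
      exact mem_closedBall_iff_norm.1 (hUR hx)
    exact add_lt_of_neg_right _ (mul_neg_of_pos_of_neg hτ (by linarith))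
  have hf_mem : MemLp (fun x => max (f x) 0) 2 (volume.restrict U) := by
    refine hu_mem.mono ((hf.continuousOn.sup continuousOn_const).aestronglyMeasurable
      hU.measurableSet) ((ae_restrict_iff' hU.measurableSet).2 (ae_of_all _ fun x hx => ?_))
    rw [norm_of_nonneg (le_max_right _ _)]
    exact max_le ((hfu (subset_closure hx)).le.trans (le_abs_self _)) (norm_nonneg _)
  have hΔf {x : E} (hx : x ∈ U) : Δ f x = Δ u x + 2 * finrank ℝ E * τ :=
    laplacian_add_mul_norm_sub_sq_sub (hu.contDiffAt (hU.mem_nhds hx)) x₀ τ (R ^ 2 + 1)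
  have hfx₀ : f x₀ ≤ 0 := nonpos_of_laplacian_pos hE hU hUb hQ hf
    (hu_cont.add hquad.continuous.continuousOn) hf_mem
    (fun x hx => (hfu hx.1.1).trans_le (hu₀ x hx)) (fun x hx hfx => by
      rw [hΔf hx]
      have := hΔu x hx (hfx.trans (hfu (subset_closure hx)))
      positivity) x₀ hx₀
  simp only [f, sub_self, norm_zero] at hfx₀
  linarith

end MaximumPrinciple

section GraphBoundary

lemma exists_eventually_abs_taylor_one_remainder_le {φ : ℝ → ℝ} (hφ : ContDiff ℝ 2 φ) (t₀ : ℝ) :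
    ∃ K > 0, ∀ᶠ t in 𝓝 t₀, |φ t - (φ t₀ + deriv φ t₀ * (t - t₀))| ≤ K * (t - t₀) ^ 2 := by
  set κ := iteratedDeriv 2 φ t₀ / 2
  have htaylor := (taylor_isLittleO_univ (n := 2) (x₀ := t₀) hφ).def one_pos
  refine ⟨1 + |κ|, by positivity, htaylor.mono fun t ht => ?_⟩
  have heval : taylorWithinEval φ 2 univ t₀ t =
      φ t₀ + deriv φ t₀ * (t - t₀) + κ * (t - t₀) ^ 2 := by
    simp only [taylorWithinEval_succ, taylor_within_zero_eval, iteratedDerivWithin_univ,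
      zero_add, iteratedDeriv_one, smul_eq_mul, Nat.factorial, κ]
    push_cast
    ring
  rw [heval, norm_eq_abs, norm_eq_abs, abs_of_nonneg (sq_nonneg (t - t₀))] at ht
  calc |φ t - (φ t₀ + deriv φ t₀ * (t - t₀))|
      = |(φ t - (φ t₀ + deriv φ t₀ * (t - t₀) + κ * (t - t₀) ^ 2)) + κ * (t - t₀) ^ 2| := by
        ring_nf
    _ ≤ 1 * (t - t₀) ^ 2 + |κ| * (t - t₀) ^ 2 := by
        refine (abs_add_le _ _).trans (add_le_add ht ?_)
        rw [abs_mul, abs_of_nonneg (sq_nonneg (t - t₀))]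
    _ = (1 + |κ|) * (t - t₀) ^ 2 := by ring

/-- In coordinates centred at `q`, the disc of radius `√(1 + m²) / (2K)` which touches the parabola
`y = m x - K x²` from below stays below it. This is `σ = 1`; `σ = -1` is the mirror image. -/
lemma dist_lt_dist_of_neg_mul_sq_lt {q x : ℂ} {σ m K : ℝ} (hK : 0 < K)
    (hx : -(K * (x.re - q.re) ^ 2) < σ * (x.im - q.im - m * (x.re - q.re))) :
    dist q (q + (σ / (2 * K) : ℝ) * ⟨m, -1⟩) < dist x (q + (σ / (2 * K) : ℝ) * ⟨m, -1⟩) := by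
  have hσ : σ = 2 * K * (σ / (2 * K)) := by field_simp
  generalize σ / (2 * K) = c at hσ ⊢
  have hside : 0 < (x.re - q.re) ^ 2 + 2 * c * (x.im - q.im - m * (x.re - q.re)) := by
    refine pos_of_mul_pos_right (a := K) ?_ hK.le
    rw [hσ] at hx
    linarith
  refine lt_of_pow_lt_pow_left₀ 2 dist_nonneg ?_
  simp only [dist_eq_norm, Complex.sq_norm, Complex.normSq_apply, Complex.sub_re, Complex.sub_im,
    Complex.add_re, Complex.add_im, Complex.re_ofReal_mul, Complex.im_ofReal_mul]
  nlinarith [sq_nonneg (x.im - q.im)]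

theorem isTwoSidedExteriorBallPoint_of_graph {U : Set ℂ} {q : ℂ} {φ : ℝ → ℝ} (hU : IsOpen U)
    (hφ : ContDiff ℝ 2 φ) (hq : q.im = φ q.re) (hgraph : ∀ᶠ x in 𝓝 q, x.im = φ x.re → x ∉ U) :
    IsTwoSidedExteriorBallPoint U q := by
  obtain ⟨K, hK, htaylor⟩ := exists_eventually_abs_taylor_one_remainder_le hφ q.re
  obtain ⟨r, hr, hball⟩ := Metric.eventually_nhds_iff_ball.1
    ((Complex.continuous_re.continuousAt.eventually htaylor).and hgraph)
  set m := deriv φ q.re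
  have hcenter {σ : ℝ} (hσ : σ ≠ 0) : q + (σ / (2 * K) : ℝ) * ⟨m, -1⟩ ≠ q := by
    refine fun h => div_ne_zero hσ (by positivity : 2 * K ≠ 0) ?_
    have him := congrArg Complex.im h
    rw [Complex.add_im, Complex.im_ofReal_mul] at him
    linarith
  have hφ_cont : Continuous fun x : ℂ => φ x.re := hφ.continuous.comp Complex.continuous_re
  have hO : IsOpen (U ∩ Metric.ball q r) := hU.inter Metric.isOpen_ball
  refine ⟨r, hr, U ∩ Metric.ball q r ∩ {x | φ x.re < x.im},
    U ∩ Metric.ball q r ∩ {x | x.im < φ x.re},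
    hO.inter (isOpen_lt hφ_cont Complex.continuous_im),
    hO.inter (isOpen_lt Complex.continuous_im hφ_cont),
    disjoint_left.2 fun x hx hx' => (mem_ofPred.1 hx.2).not_gt hx'.2, ?_,
    ⟨_, hcenter one_ne_zero, fun x hx => dist_lt_dist_of_neg_mul_sq_lt hK ?_⟩,
    ⟨_, hcenter (neg_ne_zero.2 one_ne_zero), fun x hx => dist_lt_dist_of_neg_mul_sq_lt hK ?_⟩⟩
  · rw [← inter_union_distrib_left, eq_comm, inter_eq_left]
    exact fun x hx => (lt_or_gt_of_ne fun h => (hball x hx.2).2 h hx.1).symm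
  · have := (abs_le.1 (hball x hx.1.2).1).1
    have := mem_ofPred.1 hx.2
    linarith
  · have := (abs_le.1 (hball x hx.1.2).1).2
    have := mem_ofPred.1 hx.2
    linarith

lemma IsTwoSidedExteriorBallPoint.preimage_isometryEquiv {X Y : Type*} [MetricSpace X]
    [MetricSpace Y] {U : Set Y} (e : X ≃ᵢ Y) {q : X}
    (hq : IsTwoSidedExteriorBallPoint U (e q)) : IsTwoSidedExteriorBallPoint (e ⁻¹' U) q := by
  have hexterior {A : Set Y} : (∃ z ≠ e q, ∀ x ∈ A, dist (e q) z < dist x z) →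
      ∃ z ≠ q, ∀ x ∈ e ⁻¹' A, dist q z < dist x z := by
    rintro ⟨z, hz, hA⟩
    refine ⟨e.symm z, fun h => hz (by rw [← h, e.apply_symm_apply]), fun x hx => ?_⟩
    simpa only [← e.dist_eq, e.apply_symm_apply] using hA (e x) hx
  obtain ⟨r, hr, V, W, hV, hW, hVW, hUVW, hVz, hWw⟩ := hq
  refine ⟨r, hr, e ⁻¹' V, e ⁻¹' W, hV.preimage e.continuous, hW.preimage e.continuous,
    hVW.preimage e, ?_, hexterior hVz, hexterior hWw⟩
  rw [← preimage_union, ← hUVW, preimage_inter, e.preimage_ball, e.symm_apply_apply]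

end GraphBoundary

section RealPlane

open Complex

lemma pdr_neg (u : ℝ × ℝ → ℝ) : pdr (fun y => -u y) = fun y => -pdr u y :=
  funext fun _ => deriv.fun_neg

lemma pdz_neg (u : ℝ × ℝ → ℝ) : pdz (fun y => -u y) = fun y => -pdz u y :=
  funext fun _ => deriv.fun_neg

lemma pdr_equivRealProd {u : ℝ × ℝ → ℝ} {z : ℂ}
    (hu : DifferentiableAt ℝ (fun w => u (equivRealProdCLM w)) z) :
    pdr u (equivRealProdCLM z) = fderiv ℝ (fun w => u (equivRealProdCLM w)) z 1 := by
  have hline : HasDerivAt (fun r : ℝ => (⟨r, z.im⟩ : ℂ)) 1 z.re := by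
    simpa only [mk_eq_add_mul_I, ofReal_one] using
      (hasDerivAt_id' z.re).ofReal_comp.add_const (z.im * I : ℂ)
  exact (hu.hasFDerivAt.comp_hasDerivAt z.re hline).deriv

lemma pdz_equivRealProd {u : ℝ × ℝ → ℝ} {z : ℂ}
    (hu : DifferentiableAt ℝ (fun w => u (equivRealProdCLM w)) z) :
    pdz u (equivRealProdCLM z) = fderiv ℝ (fun w => u (equivRealProdCLM w)) z I := by
  have hline : HasDerivAt (fun s : ℝ => (⟨z.re, s⟩ : ℂ)) I z.im := by
    simpa only [mk_eq_add_mul_I, one_mul, ofReal_one] using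
      ((hasDerivAt_id' z.im).ofReal_comp.mul_const I).const_add (z.re : ℂ)
  exact (hu.hasFDerivAt.comp_hasDerivAt z.im hline).deriv

lemma laplacian_comp_equivRealProd {u : ℝ × ℝ → ℝ} {z : ℂ}
    (hu : ContDiffAt ℝ 2 u (equivRealProdCLM z)) :
    Δ (fun w => u (equivRealProdCLM w)) z =
      pdr (pdr u) (equivRealProdCLM z) + pdz (pdz u) (equivRealProdCLM z) := by
  have hf : ContDiffAt ℝ 2 (fun w => u (equivRealProdCLM w)) z :=
    hu.comp z equivRealProdCLM.contDiff.contDiffAt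
  have hdiff : ∀ᶠ w in 𝓝 z, DifferentiableAt ℝ (fun w => u (equivRealProdCLM w)) w :=
    (hf.eventually (by simp)).mono fun w hw => hw.differentiableAt two_ne_zero
  have hr : (fun w => pdr u (equivRealProdCLM w)) =ᶠ[𝓝 z]
      fun w => fderiv ℝ (fun w => u (equivRealProdCLM w)) w 1 :=
    hdiff.mono fun w hw => pdr_equivRealProd hw
  have hz : (fun w => pdz u (equivRealProdCLM w)) =ᶠ[𝓝 z]
      fun w => fderiv ℝ (fun w => u (equivRealProdCLM w)) w I :=
    hdiff.mono fun w hw => pdz_equivRealProd hw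
  have hd (v : ℂ) := (contDiffAt_fderiv_apply (m := 1) hf le_rfl v).differentiableAt one_ne_zero
  rw [laplacian_eq_iteratedFDeriv_complexPlane,
    pdr_equivRealProd ((hd 1).congr_of_eventuallyEq hr),
    pdz_equivRealProd ((hd I).congr_of_eventuallyEq hz), hr.fderiv_eq, hz.fderiv_eq,
    fderiv_fderiv_apply hf, fderiv_fderiv_apply hf]
  simp only [iteratedFDeriv_two_apply, Matrix.cons_val_zero, Matrix.cons_val_one]

lemma euclDist_equivRealProd (z w : ℂ) :
    euclDist (equivRealProdCLM z) (equivRealProdCLM w) = dist z w :=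
  (dist_eq_re_im z w).symm

lemma rotPlane_equivRealProd (θ : ℝ) (z : ℂ) :
    rotPlane θ (equivRealProdCLM z) = equivRealProdCLM (rotation (Circle.exp θ) z) := by
  ext <;> simp [rotPlane, exp_ofReal_mul_I_re, exp_ofReal_mul_I_im, add_comm]

/-- Near `x` the frontier of `U` is, after a rotation of coordinates, the graph of a `C²`
function. -/
def IsPlanarGraphBoundaryPoint (U : Set (ℝ × ℝ)) (x : ℝ × ℝ) : Prop :=
  ∃ (θ : ℝ) (φ : ℝ → ℝ) (ε : ℝ), 0 < ε ∧ ContDiff ℝ 2 φ ∧ ∀ y : ℝ × ℝ, euclDist y x < ε →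
    (y ∈ frontier U ↔ (rotPlane θ y).2 = φ ((rotPlane θ y).1))

lemma IsPlanarGraphBoundaryPoint.isTwoSidedExteriorBallPoint {U : Set (ℝ × ℝ)} {q : ℂ}
    (hU : IsOpen U) (hqU : equivRealProdCLM q ∈ frontier U)
    (hq : IsPlanarGraphBoundaryPoint U (equivRealProdCLM q)) :
    IsTwoSidedExteriorBallPoint (equivRealProdCLM ⁻¹' U) q := by
  obtain ⟨θ, φ, ε, hε, hφ, hgraph⟩ := hq
  set R := rotation (Circle.exp θ)
  have hR {z : ℂ} (hz : dist z q < ε) :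
      equivRealProdCLM z ∈ frontier U ↔ (R z).im = φ (R z).re := by
    rw [hgraph _ (by rwa [euclDist_equivRealProd]), rotPlane_equivRealProd]
    rfl
  have hRq : IsTwoSidedExteriorBallPoint (R.symm ⁻¹' (equivRealProdCLM ⁻¹' U)) (R q) := by
    refine isTwoSidedExteriorBallPoint_of_graph
      ((hU.preimage equivRealProdCLM.continuous).preimage R.symm.continuous) hφ
      ((hR (by rwa [dist_self])).1 hqU) ?_
    filter_upwards [Metric.ball_mem_nhds (R q) hε] with w hw hwφ hwU
    have hdist : dist (R.symm w) q < ε := by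
      rwa [← R.dist_map, R.apply_symm_apply]
    have hfrontier := (hR hdist).2 (by rwa [R.apply_symm_apply])
    exact (hU.frontier_eq ▸ hfrontier).2 hwU
  simpa only [← preimage_comp, LinearIsometryEquiv.coe_toIsometryEquiv, Function.comp_assoc,
    R.symm_comp_self, Function.comp_id] using hRq.preimage_isometryEquiv R.toIsometryEquiv

lemma measurePreserving_equivRealProd :
    MeasurePreserving equivRealProdCLM (volume : Measure ℂ) (volume : Measure (ℝ × ℝ)) :=
  volume_preserving_equiv_real_prod

lemma nonpos_of_pdr_pdr_add_pdz_pdz_nonneg {U : Set (ℝ × ℝ)} {Q : Finset (ℝ × ℝ)}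
    {u : ℝ × ℝ → ℝ} (hU : IsOpen U) (hUb : Bornology.IsBounded U)
    (hQ : (Q : Set (ℝ × ℝ)) ⊆ frontier U) (hQ_graph : ∀ x ∈ Q, IsPlanarGraphBoundaryPoint U x)
    (hu : ContDiffOn ℝ 2 u U) (hu_cont : ContinuousOn u (closure U \ Q))
    (hu_mem : MemLp u 2 (volume.restrict U)) (hu₀ : ∀ x ∈ frontier U \ Q, u x ≤ 0)
    (hΔu : ∀ x ∈ U, 0 < u x → 0 ≤ pdr (pdr u) x + pdz (pdz u) x) : ∀ x ∈ U, u x ≤ 0 := by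
  set e := equivRealProdCLM
  set P := Q.map e.symm.toEquiv.toEmbedding
  have hP : (P : Set ℂ) = e ⁻¹' Q := by
    rw [Finset.coe_map]
    exact e.symm.toEquiv.image_eq_preimage_symm _
  have hclosure : closure (e ⁻¹' U) \ P = e ⁻¹' (closure U \ Q) := by
    rw [hP, preimage_sdiff]
    exact congrArg (· \ _) (e.toHomeomorph.preimage_closure U).symm
  have hfrontier : frontier (e ⁻¹' U) \ P = e ⁻¹' (frontier U \ Q) := by
    rw [hP, preimage_sdiff]
    exact congrArg (· \ _) (e.toHomeomorph.preimage_frontier U).symm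
  have hmax := nonpos_of_laplacian_nonneg (U := e ⁻¹' U) (Q := P) (u := fun z => u (e z))
    finrank_real_complex.ge (hU.preimage e.continuous)
    (e.antilipschitz.isBounded_preimage hUb)
    (fun q hq => by
      have hqQ : e q ∈ Q := hP.subset hq
      exact (hQ_graph _ hqQ).isTwoSidedExteriorBallPoint hU (hQ hqQ))
    (hu.comp e.contDiff.contDiffOn (mapsTo_preimage e U))
    (hclosure ▸ hu_cont.comp e.continuous.continuousOn (mapsTo_preimage e _))
    (hu_mem.comp_measurePreserving
      (measurePreserving_equivRealProd.restrict_preimage hU.measurableSet))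
    (hfrontier ▸ fun z hz => hu₀ (e z) hz)
    fun z hz huz => by
      rw [laplacian_comp_equivRealProd (hu.contDiffAt (hU.mem_nhds hz))]
      exact hΔu (e z) hz huz
  intro x hx
  simpa using hmax (e.symm x) (by simpa using hx)

end RealPlane

theorem uniqueness_Lp_planar_general
    (U : Set (ℝ × ℝ)) (hUo : IsOpen U) (hUb : Bornology.IsBounded U)
    (Q : Finset (ℝ × ℝ)) (hQ : (Q : Set (ℝ × ℝ)) ⊆ frontier U)
    (hC2 : ∀ x ∈ Q, IsPlanarGraphBoundaryPoint U x)
    (p : ℝ) (hp : 2 ≤ p) (V u : ℝ × ℝ → ℝ) (hV : ∀ x ∈ U, 0 ≤ V x)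
    (hu : MemLp u (ENNReal.ofReal p) (volume.restrict U)) (huC2 : ContDiffOn ℝ 2 u U)
    (hu_cont : ContinuousOn u (closure U \ (Q : Set (ℝ × ℝ))))
    (heq : ∀ x ∈ U, pdr (pdr u) x + pdz (pdz u) x = V x * u x)
    (hub : ∀ x ∈ frontier U \ (Q : Set (ℝ × ℝ)), u x = 0) :
    ∀ x ∈ U, u x = 0 := by
  have : IsFiniteMeasure (volume.restrict U) := ⟨by simpa using hUb.measure_lt_top⟩
  have hu₂ : MemLp u 2 (volume.restrict U) :=
    hu.mono_exponent (by simpa using ENNReal.ofReal_le_ofReal hp)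
  refine fun x hx => le_antisymm ?_ ?_
  · exact nonpos_of_pdr_pdr_add_pdz_pdz_nonneg hUo hUb hQ hC2 huC2 hu_cont hu₂
      (fun y hy => (hub y hy).le) (fun y hy huy => heq y hy ▸ mul_nonneg (hV y hy) huy.le) x hx
  · refine neg_nonpos.1 (nonpos_of_pdr_pdr_add_pdz_pdz_nonneg (u := fun y => -u y) hUo hUb hQ hC2
      huC2.neg hu_cont.neg hu₂.neg (fun y hy => (neg_eq_zero.2 (hub y hy)).le)
      (fun y hy huy => ?_) x hx)
    rw [pdr_neg, pdr_neg, pdz_neg, pdz_neg, ← neg_add, heq y hy, ← mul_neg]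
    exact mul_nonneg (hV y hy) huy.le

/-- Uniqueness of `L^p`, `p > 2`, solutions of `Δu = V u` on a bounded
`C³` planar domain vanishing on the boundary away from finitely many points `Q`,
for `0 ≤ V ≲ Σᵢ 1/|x - xᵢ|`. -/
theorem uniqueness_Lp_planar
    (U : Set (ℝ × ℝ)) (hUo : IsOpen U) (hUne : U.Nonempty)
    (hUb : Bornology.IsBounded U)
    -- the boundary is, near each of its points, the graph of a C³ function
    -- after a rotation of coordinates
    (hC3 : ∀ x ∈ frontier U, ∃ (θ : ℝ) (φ : ℝ → ℝ) (ε : ℝ), 0 < ε ∧ ContDiff ℝ 3 φ ∧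
      ∀ y : ℝ × ℝ, euclDist y x < ε →
        (y ∈ frontier U ↔ (rotPlane θ y).2 = φ ((rotPlane θ y).1)))
    (Q : Finset (ℝ × ℝ)) (hQ : (Q : Set (ℝ × ℝ)) ⊆ frontier U)
    (p : ℝ) (hp : 2 < p) (C₀ : ℝ) (hC₀ : 0 < C₀)
    (V u : ℝ × ℝ → ℝ)
    (hV : ∀ x ∈ U, 0 ≤ V x ∧ V x ≤ ∑ xi ∈ Q, C₀ / euclDist x xi)
    (hu : MemLp u (ENNReal.ofReal p) (volume.restrict U))
    (huC3 : ContDiffOn ℝ 3 u (closure U \ (Q : Set (ℝ × ℝ))))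
    (heq : ∀ x ∈ U, pdr (pdr u) x + pdz (pdz u) x = V x * u x)
    (hub : ∀ x ∈ frontier U \ (Q : Set (ℝ × ℝ)), u x = 0) :
    ∀ x ∈ U, u x = 0 := by
  have hUQ : U ⊆ closure U \ (Q : Set (ℝ × ℝ)) := subset_sdiff.2
    ⟨subset_closure, (disjoint_frontier_iff_isOpen.2 hUo).symm.mono_right hQ⟩
  exact uniqueness_Lp_planar_general U hUo hUb Q hQ
    (fun x hx => (hC3 x (hQ hx)).imp fun θ ⟨φ, ε, hε, hφ, h⟩ =>
      ⟨φ, ε, hε, hφ.of_le (by norm_num), h⟩)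
    p hp.le V u (fun x hx => (hV x hx).1) hu ((huC3.mono hUQ).of_le (by norm_num))
    huC3.continuousOn heq hub
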